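/- arXiv:2501.03742 — 10 statements merged into one kernel-verified Lean document; each statement's English description precedes it below -/
import Mathlib

section
/- Let A ∈ ℝ^{n×n} be symmetric positive definite and let Q ∈ ℝ^{n×n} satisfy ‖QᵀQ − I‖₂ ≤ ε for some ε < 1. Then for every k (1 ≤ k ≤ n), |λ_k(QᵀAQ) − λ_k(A)| ≤ ε·λ_k(A). -/
/-!
The argument is the Courant–Fischer intersection argument, in the form of Ostrowski's theorem.
Write `B = QᵀAQ`, so that `⟪x, Bx⟫ = ⟪Qx, A(Qx)⟫`, and note that `‖QᵀQ - I‖₂ ≤ ε` gives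
`|‖Qx‖² - ‖x‖²| ≤ ε‖x‖²`. Take orthonormal eigenbases of `A` and `B`, ordered by decreasing
eigenvalue. Asking that `Qx` be orthogonal to the first `k - 1` eigenvectors of `A` and `x` to the
last `n - k` eigenvectors of `B` imposes `n - 1` linear conditions, so some `x ≠ 0` satisfies them
(`exists_ne_zero_forall_eq_zero`), and for it the Rayleigh bounds give
`λ_k(B)‖x‖² ≤ ⟪x, Bx⟫ = ⟪Qx, A(Qx)⟫ ≤ λ_k(A)‖Qx‖² ≤ (1 + ε)λ_k(A)‖x‖²`.
Exchanging the roles of `A` and `B` yields `(1 - ε)λ_k(A) ≤ λ_k(B)`.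
-/

open Matrix BigOperators

/-- The `k`-th largest eigenvalue of a real matrix (zero if not Hermitian). -/
noncomputable def eigval {n : ℕ} (A : Matrix (Fin n) (Fin n) ℝ) (k : Fin n) : ℝ :=
  if h : A.IsHermitian then h.eigenvalues ((Tuple.sort h.eigenvalues) k.rev) else 0

/-- The spectral (operator 2-) norm of a real matrix. -/
noncomputable def specNorm {n : ℕ} (A : Matrix (Fin n) (Fin n) ℝ) : ℝ :=
  ‖LinearMap.toContinuousLinearMap (Matrix.toEuclideanLin A)‖

/-- The Frobenius norm of a real matrix. -/
noncomputable def frobNorm {n : ℕ} (A : Matrix (Fin n) (Fin n) ℝ) : ℝ :=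
  Real.sqrt (∑ i, ∑ j, (A i j) ^ 2)

/-- The off-quantity `off(A) = ‖A - diag(A)‖_F`. -/
noncomputable def offQ {n : ℕ} (A : Matrix (Fin n) (Fin n) ℝ) : ℝ :=
  frobNorm (A - Matrix.diagonal (fun i => A i i))

/-- Condition number κ₂(A) = λ₁(A)/λ_n(A). -/
noncomputable def kappa {n : ℕ} [NeZero n] (A : Matrix (Fin n) (Fin n) ℝ) : ℝ :=
  eigval A 0 / eigval A (Fin.rev 0)

/-- The diagonally scaled matrix `D A D`, `D = diag(a_ii^{-1/2})`. -/
noncomputable def scaled {n : ℕ} (A : Matrix (Fin n) (Fin n) ℝ) : Matrix (Fin n) (Fin n) ℝ :=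
  Matrix.diagonal (fun i => (Real.sqrt (A i i))⁻¹) * A *
    Matrix.diagonal (fun i => (Real.sqrt (A i i))⁻¹)

/-- The scaled condition number κ₂ˢ(A) = κ₂(D A D). -/
noncomputable def kappaS {n : ℕ} [NeZero n] (A : Matrix (Fin n) (Fin n) ℝ) : ℝ :=
  kappa (scaled A)

/-- Entrywise absolute value of a matrix. -/
noncomputable def absM {n : ℕ} (A : Matrix (Fin n) (Fin n) ℝ) : Matrix (Fin n) (Fin n) ℝ :=
  Matrix.of fun i j => |A i j|

/-- An orthonormal eigenbasis ordered consistently with `eigval`. -/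
lemma exists_sorted_eigenbasis {n : ℕ} {M : Matrix (Fin n) (Fin n) ℝ} (hM : M.IsHermitian) :
    ∃ e : OrthonormalBasis (Fin n) ℝ (EuclideanSpace ℝ (Fin n)),
      ∀ k, toEuclideanLin M (e k) = eigval M k • e k := by
  refine ⟨hM.eigenvectorBasis.reindex
    (Fin.revPerm.trans (Tuple.sort hM.eigenvalues)).symm, fun k => ?_⟩
  have h := hM.mulVec_eigenvectorBasis (Tuple.sort hM.eigenvalues k.rev)
  simp only [eigval, dif_pos hM, OrthonormalBasis.reindex_apply, Equiv.symm_symm,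
    Equiv.trans_apply, Fin.revPerm_apply]
  ext i
  simpa [toEuclideanLin] using congrFun h i

lemma eigval_antitone {n : ℕ} {M : Matrix (Fin n) (Fin n) ℝ} (hM : M.IsHermitian) :
    Antitone (eigval M) := by
  intro i j hij
  simp only [eigval, dif_pos hM]
  exact Tuple.monotone_sort hM.eigenvalues (Fin.rev_le_rev.mpr hij)

/-- The quadratic form of a Hermitian matrix in the coordinates of an eigenbasis. -/
lemma inner_toEuclideanLin_eq_sum {n : ℕ} {M : Matrix (Fin n) (Fin n) ℝ} (hM : M.IsHermitian)
    (e : OrthonormalBasis (Fin n) ℝ (EuclideanSpace ℝ (Fin n))) {c : Fin n → ℝ}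
    (he : ∀ k, toEuclideanLin M (e k) = c k • e k) (x : EuclideanSpace ℝ (Fin n)) :
    inner ℝ x (toEuclideanLin M x) = ∑ i, c i * (inner ℝ (e i) x) ^ 2 := by
  rw [← e.sum_inner_mul_inner]
  refine Finset.sum_congr rfl fun i _ => ?_
  have hs := (isSymmetric_toEuclideanLin_iff.mpr hM) (e i) x
  rw [← hs, he, real_inner_smul_left, real_inner_comm]
  ring

lemma norm_sq_eq_sum_inner {n : ℕ} (e : OrthonormalBasis (Fin n) ℝ (EuclideanSpace ℝ (Fin n)))
    (x : EuclideanSpace ℝ (Fin n)) : ‖x‖ ^ 2 = ∑ i, (inner ℝ (e i) x) ^ 2 := by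
  simpa using (e.sum_sq_norm_inner_right x).symm

lemma rayleigh_le {n : ℕ} {M : Matrix (Fin n) (Fin n) ℝ} (hM : M.IsHermitian)
    (e : OrthonormalBasis (Fin n) ℝ (EuclideanSpace ℝ (Fin n)))
    (he : ∀ k, toEuclideanLin M (e k) = eigval M k • e k) (k : Fin n)
    (x : EuclideanSpace ℝ (Fin n)) (hx : ∀ i < k, inner ℝ (e i) x = 0) :
    inner ℝ x (toEuclideanLin M x) ≤ eigval M k * ‖x‖ ^ 2 := by
  rw [inner_toEuclideanLin_eq_sum hM e he, norm_sq_eq_sum_inner e, Finset.mul_sum]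
  refine Finset.sum_le_sum fun i _ => ?_
  rcases lt_or_ge i k with h | h
  · simp [hx i h]
  · exact mul_le_mul_of_nonneg_right (eigval_antitone hM h) (sq_nonneg _)

lemma le_rayleigh {n : ℕ} {M : Matrix (Fin n) (Fin n) ℝ} (hM : M.IsHermitian)
    (e : OrthonormalBasis (Fin n) ℝ (EuclideanSpace ℝ (Fin n)))
    (he : ∀ k, toEuclideanLin M (e k) = eigval M k • e k) (k : Fin n)
    (x : EuclideanSpace ℝ (Fin n)) (hx : ∀ i, k < i → inner ℝ (e i) x = 0) :
    eigval M k * ‖x‖ ^ 2 ≤ inner ℝ x (toEuclideanLin M x) := by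
  rw [inner_toEuclideanLin_eq_sum hM e he, norm_sq_eq_sum_inner e, Finset.mul_sum]
  refine Finset.sum_le_sum fun i _ => ?_
  rcases lt_or_ge k i with h | h
  · simp [hx i h]
  · exact mul_le_mul_of_nonneg_right (eigval_antitone hM h) (sq_nonneg _)

/-- The `n - 1` linear conditions indexed by `i ≠ k` have a common nonzero solution. This replaces
the dimension count for intersecting two spans of eigenvectors. -/
lemma exists_ne_zero_forall_eq_zero {n : ℕ} (u v : Fin n → EuclideanSpace ℝ (Fin n) →ₗ[ℝ] ℝ)
    (k : Fin n) : ∃ x ≠ 0, (∀ i < k, u i x = 0) ∧ ∀ i, k < i → v i x = 0 := by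
  let L : EuclideanSpace ℝ (Fin n) →ₗ[ℝ] ({i : Fin n // i ≠ k} → ℝ) :=
    LinearMap.pi fun i => if i.1 < k then u i else v i
  have hL : LinearMap.ker L ≠ ⊥ := by
    apply LinearMap.ker_ne_bot_of_finrank_lt
    have := k.pos
    simp [Fintype.card_subtype_compl]
    omega
  obtain ⟨x, hx, hx0⟩ := (Submodule.ne_bot_iff _).mp hL
  refine ⟨x, hx0, fun i hi => ?_, fun i hi => ?_⟩
  · simpa [L, hi] using congrFun (LinearMap.mem_ker.mp hx) ⟨i, hi.ne⟩
  · simpa [L, hi.not_gt] using congrFun (LinearMap.mem_ker.mp hx) ⟨i, hi.ne'⟩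

lemma inner_congruence {n : ℕ} (A Q : Matrix (Fin n) (Fin n) ℝ) (x : EuclideanSpace ℝ (Fin n)) :
    inner ℝ x (toEuclideanLin (Qᵀ * A * Q) x) =
      inner ℝ (toEuclideanLin Q x) (toEuclideanLin A (toEuclideanLin Q x)) := by
  simp only [EuclideanSpace.inner_eq_star_dotProduct, star_trivial, toEuclideanLin,
    toLpLin_apply, ← mulVec_mulVec]
  rw [dotProduct_comm, dotProduct_mulVec, vecMul_transpose, dotProduct_comm]

lemma abs_norm_sq_sub_le {n : ℕ} {Q : Matrix (Fin n) (Fin n) ℝ} {ε : ℝ}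
    (hQ : specNorm (Qᵀ * Q - 1) ≤ ε) (x : EuclideanSpace ℝ (Fin n)) :
    |‖toEuclideanLin Q x‖ ^ 2 - ‖x‖ ^ 2| ≤ ε * ‖x‖ ^ 2 := by
  have h1 : ‖toEuclideanLin Q x‖ ^ 2 - ‖x‖ ^ 2 =
      inner ℝ x (toEuclideanLin (Qᵀ * Q - 1) x) := by
    have := inner_congruence 1 Q x
    simp only [mul_one] at this
    have h2 : ∀ y : EuclideanSpace ℝ (Fin n),
        toEuclideanLin (1 : Matrix (Fin n) (Fin n) ℝ) y = y := fun y => by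
      simp [toEuclideanLin]
    rw [map_sub, LinearMap.sub_apply, inner_sub_right, this, h2, h2,
      real_inner_self_eq_norm_sq, real_inner_self_eq_norm_sq]
  have h3 : ‖toEuclideanLin (Qᵀ * Q - 1) x‖ ≤ ε * ‖x‖ := by
    rw [specNorm] at hQ
    exact ContinuousLinearMap.le_of_opNorm_le _ hQ x
  rw [h1]
  calc _ ≤ ‖x‖ * ‖toEuclideanLin (Qᵀ * Q - 1) x‖ := abs_real_inner_le_norm _ _
    _ ≤ ‖x‖ * (ε * ‖x‖) := mul_le_mul_of_nonneg_left h3 (norm_nonneg x)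
    _ = ε * ‖x‖ ^ 2 := by ring

/-- If A is symmetric positive definite and ‖QᵀQ − I‖₂ ≤ ε < 1, then
for every k, |λ_k(QᵀAQ) − λ_k(A)| ≤ ε·λ_k(A). -/
theorem stmt0 {n : ℕ} (A Q : Matrix (Fin n) (Fin n) ℝ) (ε : ℝ)
    (hA : A.PosDef) (hQ : specNorm (Qᵀ * Q - 1) ≤ ε) (hε : ε < 1) (k : Fin n) :
    |eigval (Qᵀ * A * Q) k - eigval A k| ≤ ε * eigval A k := by
  have hAh : A.IsHermitian := hA.isHermitian
  have hB : (Qᵀ * A * Q).IsHermitian := by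
    simpa using isHermitian_conjTranspose_mul_mul Q hAh
  have hpos : 0 ≤ eigval A k := by
    simp only [eigval, dif_pos hAh]
    exact (hA.eigenvalues_pos _).le
  obtain ⟨f, hf⟩ := exists_sorted_eigenbasis hAh
  obtain ⟨e, he⟩ := exists_sorted_eigenbasis hB
  let u : Fin n → EuclideanSpace ℝ (Fin n) →ₗ[ℝ] ℝ :=
    fun i => (innerₛₗ ℝ (f i)).comp (toEuclideanLin Q)
  let v : Fin n → EuclideanSpace ℝ (Fin n) →ₗ[ℝ] ℝ := fun i => innerₛₗ ℝ (e i)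
  rw [abs_le]
  constructor
  · obtain ⟨x, hx0, h1, h2⟩ := exists_ne_zero_forall_eq_zero v u k
    have hx : 0 < ‖x‖ ^ 2 := by positivity
    have hlo := le_rayleigh hAh f hf k (toEuclideanLin Q x) h2
    have hup := rayleigh_le hB e he k x h1
    rw [inner_congruence] at hup
    have hn := mul_le_mul_of_nonneg_left (abs_le.mp (abs_norm_sq_sub_le hQ x)).1 hpos
    have : (1 - ε) * eigval A k * ‖x‖ ^ 2 ≤ eigval (Qᵀ * A * Q) k * ‖x‖ ^ 2 := by linarith
    linarith [le_of_mul_le_mul_right this hx]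
  · obtain ⟨x, hx0, h1, h2⟩ := exists_ne_zero_forall_eq_zero u v k
    have hx : 0 < ‖x‖ ^ 2 := by positivity
    have hup := rayleigh_le hAh f hf k (toEuclideanLin Q x) h1
    have hlo := le_rayleigh hB e he k x h2
    rw [inner_congruence] at hlo
    have hn := mul_le_mul_of_nonneg_left (abs_le.mp (abs_norm_sq_sub_le hQ x)).2 hpos
    have : eigval (Qᵀ * A * Q) k * ‖x‖ ^ 2 ≤ (1 + ε) * eigval A k * ‖x‖ ^ 2 := by linarith
    linarith [le_of_mul_le_mul_right this hx]
end

section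
/- Let A ∈ ℝ^{n×n} be symmetric positive definite and let ΔA be a symmetric matrix satisfying |Δa_{ij}| ≤ ε√(a_{ii}a_{jj}) for all i, j, for some ε > 0. If ε·n·κ₂ˢ(A) < 1, then for all k, |λ_k(A + ΔA) − λ_k(A)| / λ_k(A) ≤ ε·n·κ₂ˢ(A). -/
/-!
The perturbation is small relative to the quadratic form of `A`: with `y i = √(a i i) * x i` and
`H` the scaled matrix, the entrywise bound and Cauchy-Schwarz give
`|xᵀ ΔA x| ≤ ε (∑ |y i|)² ≤ ε n ‖y‖²`, while `xᵀ A x = yᵀ H y ≥ λ_n(H) ‖y‖²`. As `H` has unit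
diagonal, `λ₁(H) ≥ 1`, so `1 / λ_n(H) ≤ κ₂(H)` and `|xᵀ ΔA x| ≤ η * xᵀ A x` with
`η = ε n κ₂ˢ(A)` (`abs_quadForm_perturb_le`). Hence
`(1 - η) xᵀ A x ≤ xᵀ (A + ΔA) x ≤ (1 + η) xᵀ A x`, and these inequalities pass to the `k`-th
eigenvalues by the monotonicity principle of Weyl (`eigval_mono`), which is proved by finding a
nonzero vector orthogonal to the top `k - 1` eigenvectors of one matrix and to the bottom `n - k`
eigenvectors of the other.
-/

open Matrix BigOperators

/-- The quadratic form `xᵀ A x`. -/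
noncomputable def quadForm {n : ℕ} (A : Matrix (Fin n) (Fin n) ℝ)
    (x : EuclideanSpace ℝ (Fin n)) : ℝ :=
  inner ℝ x (Matrix.toEuclideanLin A x)

lemma quadForm_eq_sum {n : ℕ} (A : Matrix (Fin n) (Fin n) ℝ) (x : EuclideanSpace ℝ (Fin n)) :
    quadForm A x = ∑ i, ∑ j, x i * A i j * x j := by
  simp [quadForm, PiLp.inner_apply, Matrix.toLpLin_apply, Matrix.mulVec, dotProduct,
    Finset.sum_mul]
  refine Finset.sum_congr rfl fun i _ => Finset.sum_congr rfl fun j _ => by ring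

/-- An orthonormal basis of eigenvectors of a symmetric matrix, ordered so that the eigenvalues
decrease. -/
noncomputable def eigBasis {n : ℕ} {A : Matrix (Fin n) (Fin n) ℝ} (hA : A.IsHermitian) :
    OrthonormalBasis (Fin n) ℝ (EuclideanSpace ℝ (Fin n)) :=
  hA.eigenvectorBasis.reindex (Fin.revPerm.trans (Tuple.sort hA.eigenvalues)).symm

lemma eigBasis_apply {n : ℕ} {A : Matrix (Fin n) (Fin n) ℝ} (hA : A.IsHermitian) (k : Fin n) :
    Matrix.toEuclideanLin A (eigBasis hA k) = eigval A k • eigBasis hA k := by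
  simp only [eigBasis, OrthonormalBasis.reindex_apply, eigval, hA, dif_pos, Equiv.symm_symm,
    Equiv.trans_apply, Fin.revPerm_apply]
  ext i
  simp [Matrix.toLpLin_apply, hA.mulVec_eigenvectorBasis]

lemma eigval_antitone_s1 {n : ℕ} {A : Matrix (Fin n) (Fin n) ℝ} (hA : A.IsHermitian) :
    Antitone (eigval A) := by
  intro i j hij
  simp only [eigval, hA, dif_pos]
  exact Tuple.monotone_sort hA.eigenvalues (Fin.rev_le_rev.mpr hij)

lemma quadForm_eq_sum_eigval {n : ℕ} {A : Matrix (Fin n) (Fin n) ℝ} (hA : A.IsHermitian)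
    (x : EuclideanSpace ℝ (Fin n)) :
    quadForm A x = ∑ i, eigval A i * (inner ℝ (eigBasis hA i) x) ^ 2 := by
  rw [quadForm, ← (eigBasis hA).sum_inner_mul_inner]
  refine Finset.sum_congr rfl fun i _ => ?_
  rw [← (Matrix.isSymmetric_toEuclideanLin_iff.mpr hA) (eigBasis hA i) x, eigBasis_apply,
    real_inner_smul_left, real_inner_comm]
  ring

lemma norm_sq_eq_sum_eigBasis {n : ℕ} {A : Matrix (Fin n) (Fin n) ℝ} (hA : A.IsHermitian)
    (x : EuclideanSpace ℝ (Fin n)) :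
    ‖x‖ ^ 2 = ∑ i, (inner ℝ (eigBasis hA i) x) ^ 2 :=
  ((eigBasis hA).sum_sq_inner_right x).symm

lemma quadForm_le_of_orthogonal {n : ℕ} {A : Matrix (Fin n) (Fin n) ℝ} (hA : A.IsHermitian)
    (k : Fin n) (x : EuclideanSpace ℝ (Fin n)) (hx : ∀ i < k, inner ℝ (eigBasis hA i) x = 0) :
    quadForm A x ≤ eigval A k * ‖x‖ ^ 2 := by
  rw [quadForm_eq_sum_eigval hA, norm_sq_eq_sum_eigBasis hA, Finset.mul_sum]
  refine Finset.sum_le_sum fun i _ => ?_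
  rcases lt_or_ge i k with h | h
  · simp [hx i h]
  · exact mul_le_mul_of_nonneg_right (eigval_antitone_s1 hA h) (sq_nonneg _)

lemma le_quadForm_of_orthogonal {n : ℕ} {A : Matrix (Fin n) (Fin n) ℝ} (hA : A.IsHermitian)
    (k : Fin n) (x : EuclideanSpace ℝ (Fin n)) (hx : ∀ i, k < i → inner ℝ (eigBasis hA i) x = 0) :
    eigval A k * ‖x‖ ^ 2 ≤ quadForm A x := by
  rw [quadForm_eq_sum_eigval hA, norm_sq_eq_sum_eigBasis hA, Finset.mul_sum]
  refine Finset.sum_le_sum fun i _ => ?_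
  rcases lt_or_ge k i with h | h
  · simp [hx i h]
  · exact mul_le_mul_of_nonneg_right (eigval_antitone_s1 hA h) (sq_nonneg _)

/-- The two families of orthogonality conditions number `n - 1` in total, so they have a common
nonzero solution. -/
lemma exists_ne_zero_orthogonal {n : ℕ} (u v : Fin n → EuclideanSpace ℝ (Fin n)) (k : Fin n) :
    ∃ x : EuclideanSpace ℝ (Fin n), x ≠ 0 ∧ (∀ i < k, inner ℝ (u i) x = 0) ∧
      ∀ i, k < i → inner ℝ (v i) x = 0 := by
  let f : EuclideanSpace ℝ (Fin n) →ₗ[ℝ] ({i : Fin n // i ≠ k} → ℝ) :=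
    LinearMap.pi fun i => (innerₛₗ ℝ) (if i.1 < k then u i.1 else v i.1)
  have hker : LinearMap.ker f ≠ ⊥ := by
    apply LinearMap.ker_ne_bot_of_finrank_lt
    have hn := k.pos
    simp [Fintype.card_subtype_compl]
    omega
  obtain ⟨x, hx, hx0⟩ := (Submodule.ne_bot_iff _).mp hker
  have hf : ∀ i : {i : Fin n // i ≠ k}, inner ℝ (if i.1 < k then u i.1 else v i.1) x = 0 :=
    fun i => congrFun (LinearMap.mem_ker.mp hx) i
  refine ⟨x, hx0, fun i hi => ?_, fun i hi => ?_⟩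
  · simpa [hi] using hf ⟨i, hi.ne⟩
  · simpa [hi.not_gt] using hf ⟨i, hi.ne.symm⟩

/-- Weyl monotonicity: an inequality between quadratic forms passes to the `k`-th eigenvalues. -/
lemma eigval_mono {n : ℕ} {A B : Matrix (Fin n) (Fin n) ℝ} (hA : A.IsHermitian)
    (hB : B.IsHermitian) {a b : ℝ} (ha : 0 ≤ a) (hb : 0 ≤ b)
    (h : ∀ x, a * quadForm A x ≤ b * quadForm B x) (k : Fin n) :
    a * eigval A k ≤ b * eigval B k := by
  obtain ⟨x, hx0, hxB, hxA⟩ := exists_ne_zero_orthogonal (eigBasis hB) (eigBasis hA) k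
  have h1 := mul_le_mul_of_nonneg_left (le_quadForm_of_orthogonal hA k x hxA) ha
  have h2 := mul_le_mul_of_nonneg_left (quadForm_le_of_orthogonal hB k x hxB) hb
  have hpos : 0 < ‖x‖ ^ 2 := by positivity
  refine le_of_mul_le_mul_right ?_ hpos
  linarith [h x]

lemma eigval_pos {n : ℕ} {A : Matrix (Fin n) (Fin n) ℝ} (hA : A.PosDef) (k : Fin n) :
    0 < eigval A k := by
  simp only [eigval, hA.isHermitian, dif_pos]
  exact hA.eigenvalues_pos _

lemma scaled_apply {n : ℕ} (A : Matrix (Fin n) (Fin n) ℝ) (i j : Fin n) :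
    scaled A i j = (Real.sqrt (A i i))⁻¹ * A i j * (Real.sqrt (A j j))⁻¹ := by
  simp [scaled, Matrix.mul_diagonal, Matrix.diagonal_mul]

lemma scaled_posDef {n : ℕ} {A : Matrix (Fin n) (Fin n) ℝ} (hA : A.PosDef) :
    (scaled A).PosDef := by
  have hu : IsUnit (Matrix.diagonal (fun i => (Real.sqrt (A i i))⁻¹)) := by
    rw [Matrix.isUnit_diagonal, Pi.isUnit_iff]
    exact fun i => (inv_pos.mpr (Real.sqrt_pos.mpr hA.diag_pos)).ne'.isUnit
  have h := hA.conjTranspose_mul_mul_same (Matrix.mulVec_injective_of_isUnit hu)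
  simpa [scaled, Matrix.diagonal_conjTranspose] using h

lemma inv_eigval_le_kappaS {n : ℕ} [NeZero n] {A : Matrix (Fin n) (Fin n) ℝ} (hA : A.PosDef) :
    (eigval (scaled A) (Fin.rev 0))⁻¹ ≤ kappaS A := by
  have hH := scaled_posDef hA
  -- the Rayleigh quotient of `H` at the first unit vector is the diagonal entry `1`
  have h1 : 1 ≤ eigval (scaled A) 0 := by
    have h := quadForm_le_of_orthogonal hH.isHermitian 0 (EuclideanSpace.single 0 1)
      (fun i hi => absurd hi (Fin.not_lt_zero i))
    have hd : scaled A 0 0 = 1 := by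
      have hp : 0 < A 0 0 := hA.diag_pos
      have hs := Real.sqrt_pos.mpr hp
      rw [scaled_apply]
      field_simp
      exact (Real.sq_sqrt hp.le).symm
    rw [quadForm_eq_sum] at h
    simpa [Pi.single_apply, hd] using h
  rw [kappaS, kappa, div_eq_mul_inv]
  exact le_mul_of_one_le_left (inv_pos.mpr (eigval_pos hH _)).le h1

lemma abs_quadForm_perturb_le {n : ℕ} [NeZero n] {A ΔA : Matrix (Fin n) (Fin n) ℝ} {ε : ℝ}
    (hA : A.PosDef) (hb : ∀ i j, |ΔA i j| ≤ ε * Real.sqrt (A i i * A j j))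
    (hε : 0 < ε) (x : EuclideanSpace ℝ (Fin n)) :
    |quadForm ΔA x| ≤ ε * n * kappaS A * quadForm A x := by
  have hH := scaled_posDef hA
  have hpos : ∀ i, 0 < Real.sqrt (A i i) := fun i => Real.sqrt_pos.mpr hA.diag_pos
  let y : EuclideanSpace ℝ (Fin n) := WithLp.toLp 2 fun i => Real.sqrt (A i i) * x i
  have hy : ∀ i, y i = Real.sqrt (A i i) * x i := fun i => rfl
  have hform : quadForm A x = quadForm (scaled A) y := by
    rw [quadForm_eq_sum, quadForm_eq_sum]
    refine Finset.sum_congr rfl fun i _ => Finset.sum_congr rfl fun j _ => ?_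
    have := (hpos i).ne'
    have := (hpos j).ne'
    rw [scaled_apply, hy, hy]
    field_simp
  have hlow : eigval (scaled A) (Fin.rev 0) * ‖y‖ ^ 2 ≤ quadForm A x := by
    rw [hform]
    refine le_quadForm_of_orthogonal hH.isHermitian _ y fun i hi => absurd hi (not_lt.mpr ?_)
    rw [← Fin.rev_rev i]
    exact Fin.rev_le_rev.mpr (Fin.zero_le _)
  have hup : |quadForm ΔA x| ≤ ε * (n * ‖y‖ ^ 2) := by
    have hcs : (∑ i, |y i|) ^ 2 ≤ n * ‖y‖ ^ 2 := by
      have h := sq_sum_le_card_mul_sum_sq (s := Finset.univ) (f := fun i => |y i|)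
      rw [EuclideanSpace.norm_sq_eq]
      simpa using h
    refine le_trans ?_ (mul_le_mul_of_nonneg_left hcs hε.le)
    rw [quadForm_eq_sum, sq, Finset.sum_mul_sum, Finset.mul_sum]
    refine (Finset.abs_sum_le_sum_abs _ _).trans (Finset.sum_le_sum fun i _ => ?_)
    rw [Finset.mul_sum]
    refine (Finset.abs_sum_le_sum_abs _ _).trans (Finset.sum_le_sum fun j _ => ?_)
    rw [abs_mul, abs_mul, hy, hy, abs_mul, abs_mul, abs_of_pos (hpos i), abs_of_pos (hpos j)]
    have h := hb i j
    rw [Real.sqrt_mul hA.diag_pos.le] at h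
    calc |x i| * |ΔA i j| * |x j|
        ≤ |x i| * (ε * (Real.sqrt (A i i) * Real.sqrt (A j j))) * |x j| := by gcongr
      _ = _ := by ring
  have hmin := eigval_pos hH (Fin.rev 0)
  have hnorm : ‖y‖ ^ 2 ≤ kappaS A * quadForm A x := by
    have hq : 0 ≤ quadForm A x := le_trans (by positivity) hlow
    calc ‖y‖ ^ 2 ≤ (eigval (scaled A) (Fin.rev 0))⁻¹ * quadForm A x := by
          rwa [inv_mul_eq_div, le_div_iff₀' hmin]
      _ ≤ _ := mul_le_mul_of_nonneg_right (inv_eigval_le_kappaS hA) hq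
  calc |quadForm ΔA x| ≤ ε * (n * ‖y‖ ^ 2) := hup
    _ ≤ ε * (n * (kappaS A * quadForm A x)) := by gcongr
    _ = _ := by ring

/-- Thm 2.1 & 2.17 of Veselić–Slapničar: relative eigenvalue
perturbation bound under an entrywise graded perturbation. -/
theorem stmt1 {n : ℕ} [NeZero n] (A ΔA : Matrix (Fin n) (Fin n) ℝ) (ε : ℝ)
    (hA : A.PosDef) (hΔ : ΔA.IsHermitian)
    (hb : ∀ i j, |ΔA i j| ≤ ε * Real.sqrt (A i i * A j j))
    (hε : 0 < ε) (hcond : ε * n * kappaS A < 1) (k : Fin n) :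
    |eigval (A + ΔA) k - eigval A k| / eigval A k ≤ ε * n * kappaS A := by
  have hquad := abs_quadForm_perturb_le hA hb hε
  have hB : (A + ΔA).IsHermitian := hA.isHermitian.add hΔ
  have hadd : ∀ x, quadForm (A + ΔA) x = quadForm A x + quadForm ΔA x := fun x => by
    simp [quadForm, inner_add_right]
  have hpos := eigval_pos hA k
  have hκ : 0 ≤ kappaS A :=
    (inv_pos.mpr (eigval_pos (scaled_posDef hA) _)).le.trans (inv_eigval_le_kappaS hA)
  have hη : 0 ≤ ε * n * kappaS A := by positivity
  have hup := eigval_mono hB hA.isHermitian zero_le_one (by linarith : 0 ≤ 1 + ε * n * kappaS A)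
    (fun x => by rw [hadd]; linarith [(abs_le.mp (hquad x)).2]) k
  have hlow := eigval_mono hA.isHermitian hB (by linarith : 0 ≤ 1 - ε * n * kappaS A) zero_le_one
    (fun x => by rw [hadd]; linarith [(abs_le.mp (hquad x)).1]) k
  rw [div_le_iff₀ hpos, abs_le]
  constructor <;> linarith
end

section
/- Let A, Q, Δ ∈ ℝ^{n×n}, set Ã = QᵀAQ, and let u, γ_h, ε ∈ ℝ satisfy 0 < γ_h ≤ u and ‖QᵀQ − I‖₂ ≤ ε ≤ 1. If |Δ| ≤ u|Ã| + 4γ_h|Qᵀ||A||Q| entrywise, then ‖Δ‖_F ≤ 10·n·u·‖A‖_F. -/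
/-!
Since `|QᵀAQ| ≤ |Qᵀ||A||Q|` entrywise and `γh ≤ u`, the hypothesis gives `|Δ| ≤ 5u |Qᵀ||A||Q|`.
The Frobenius norm is monotone in absolute values of entries, submultiplicative, and invariant
under transposition and entrywise absolute value, so `‖Δ‖_F ≤ 5u ‖Q‖_F² ‖A‖_F`. Finally
`‖Q‖_F² = tr(QᵀQ) ≤ 2n`, because each diagonal entry of `QᵀQ - I` is at most its spectral norm,
hence at most `1`.
-/

open Matrix BigOperators

section Frobenius

attribute [local instance] Matrix.frobeniusSeminormedAddCommGroup

/-- `frobNorm` agrees with Mathlib's Frobenius norm, whence it is submultiplicative. -/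
lemma frobNorm_mul_le {n : ℕ} (A B : Matrix (Fin n) (Fin n) ℝ) :
    frobNorm (A * B) ≤ frobNorm A * frobNorm B := by
  have key (M : Matrix (Fin n) (Fin n) ℝ) : frobNorm M = ‖M‖ := by
    simp [frobNorm, Matrix.frobenius_norm_def, Real.sqrt_eq_rpow]
  simpa only [key] using Matrix.frobenius_norm_mul A B

end Frobenius

lemma frobNorm_nonneg {n : ℕ} (A : Matrix (Fin n) (Fin n) ℝ) : 0 ≤ frobNorm A :=
  Real.sqrt_nonneg _

lemma frobNorm_absM {n : ℕ} (A : Matrix (Fin n) (Fin n) ℝ) : frobNorm (absM A) = frobNorm A := by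
  simp [frobNorm, absM]

lemma frobNorm_transpose {n : ℕ} (A : Matrix (Fin n) (Fin n) ℝ) :
    frobNorm Aᵀ = frobNorm A := by
  unfold frobNorm
  rw [Finset.sum_comm]
  rfl

lemma frobNorm_le_of_abs_le {n : ℕ} {A B : Matrix (Fin n) (Fin n) ℝ} {c : ℝ} (hc : 0 ≤ c)
    (h : ∀ i j, |A i j| ≤ c * B i j) : frobNorm A ≤ c * frobNorm B := by
  unfold frobNorm
  rw [← Real.sqrt_sq hc, ← Real.sqrt_mul (sq_nonneg c)]
  apply Real.sqrt_le_sqrt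
  simp only [Finset.mul_sum, ← mul_pow]
  refine Finset.sum_le_sum fun i _ => Finset.sum_le_sum fun j _ => ?_
  rw [← sq_abs (A i j)]
  exact pow_le_pow_left₀ (abs_nonneg _) (h i j) 2

lemma abs_mul_apply_le {n : ℕ} {A B A' B' : Matrix (Fin n) (Fin n) ℝ}
    (hA : ∀ i j, |A i j| ≤ A' i j) (hB : ∀ i j, |B i j| ≤ B' i j) (i j : Fin n) :
    |(A * B) i j| ≤ (A' * B') i j := by
  simp only [Matrix.mul_apply]
  refine (Finset.abs_sum_le_sum_abs _ _).trans (Finset.sum_le_sum fun k _ => ?_)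
  rw [abs_mul]
  exact mul_le_mul (hA i k) (hB k j) (abs_nonneg _) ((abs_nonneg _).trans (hA i k))

/-- The diagonal entry `M j j` is a coordinate of `M e_j`, where `e_j` is a unit vector. -/
lemma diag_le_specNorm {n : ℕ} (M : Matrix (Fin n) (Fin n) ℝ) (j : Fin n) :
    M j j ≤ specNorm M := by
  have h1 := (LinearMap.toContinuousLinearMap (Matrix.toEuclideanLin M)).le_opNorm
    (EuclideanSpace.single j (1 : ℝ))
  have h2 := PiLp.norm_apply_le
    ((LinearMap.toContinuousLinearMap (Matrix.toEuclideanLin M)) (EuclideanSpace.single j (1 : ℝ))) j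
  have h3 : ((LinearMap.toContinuousLinearMap (Matrix.toEuclideanLin M))
      (EuclideanSpace.single j (1 : ℝ))) j = M j j := by
    simp [Matrix.toLpLin_apply]
  rw [h3] at h2
  rw [PiLp.norm_single, norm_one, mul_one] at h1
  exact (le_abs_self _).trans (h2.trans h1)

lemma frobNorm_sq_le {n : ℕ} (Q : Matrix (Fin n) (Fin n) ℝ) (h : specNorm (Qᵀ * Q - 1) ≤ 1) :
    frobNorm Q * frobNorm Q ≤ 2 * n := by
  unfold frobNorm
  rw [Real.mul_self_sqrt (by positivity), Finset.sum_comm]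
  calc ∑ j, ∑ i, Q i j ^ 2 ≤ ∑ _j : Fin n, (2 : ℝ) := by
        refine Finset.sum_le_sum fun j _ => ?_
        have hj := (diag_le_specNorm _ j).trans h
        simp only [Matrix.sub_apply, Matrix.one_apply_eq, Matrix.mul_apply,
          Matrix.transpose_apply, ← pow_two] at hj
        linarith
    _ = 2 * n := by simp [mul_comm]

/-- normwise consequence of the componentwise bound on Δ. -/
theorem stmt4 {n : ℕ} (A Q Δ : Matrix (Fin n) (Fin n) ℝ) (u γh ε : ℝ)
    (hγ0 : 0 < γh) (hγu : γh ≤ u)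
    (hQ : specNorm (Qᵀ * Q - 1) ≤ ε) (hε : ε ≤ 1)
    (hΔ : ∀ i j, |Δ i j| ≤
      u * |(Qᵀ * A * Q) i j| + 4 * γh * (absM Qᵀ * absM A * absM Q) i j) :
    frobNorm Δ ≤ 10 * n * u * frobNorm A := by
  have hu : 0 ≤ u := (hγ0.trans_le hγu).le
  set B := absM Qᵀ * absM A * absM Q with hB
  have habs (i j : Fin n) : |(Qᵀ * A * Q) i j| ≤ B i j :=
    abs_mul_apply_le (abs_mul_apply_le (fun _ _ => le_rfl) fun _ _ => le_rfl)
      (fun _ _ => le_rfl) i j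
  have hΔB : frobNorm Δ ≤ 5 * u * frobNorm B := by
    refine frobNorm_le_of_abs_le (by positivity) fun i j => (hΔ i j).trans ?_
    have hB0 : 0 ≤ B i j := (abs_nonneg _).trans (habs i j)
    nlinarith [mul_le_mul_of_nonneg_left (habs i j) hu, mul_le_mul_of_nonneg_right hγu hB0]
  have hBn : frobNorm B ≤ frobNorm Q * frobNorm A * frobNorm Q := by
    calc frobNorm B ≤ frobNorm (absM Qᵀ) * frobNorm (absM A) * frobNorm (absM Q) :=
          (frobNorm_mul_le _ _).trans
            (mul_le_mul_of_nonneg_right (frobNorm_mul_le _ _) (frobNorm_nonneg _))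
      _ = _ := by simp only [frobNorm_absM, frobNorm_transpose]
  have hQn := frobNorm_sq_le Q (hQ.trans hε)
  calc frobNorm Δ ≤ 5 * u * (frobNorm Q * frobNorm A * frobNorm Q) :=
        hΔB.trans (mul_le_mul_of_nonneg_left hBn (by positivity))
    _ = 5 * u * frobNorm A * (frobNorm Q * frobNorm Q) := by ring
    _ ≤ 5 * u * frobNorm A * (2 * n) :=
        mul_le_mul_of_nonneg_left hQn (mul_nonneg (by positivity) (frobNorm_nonneg A))
    _ = 10 * n * u * frobNorm A := by ring
end

section
/- Let A ∈ ℝ^{n×n} be symmetric positive definite, let Q ∈ ℝ^{n×n} satisfy ‖QᵀQ − I‖₂ ≤ ε for some ε < 1, set Ã = QᵀAQ, and let Δ be a symmetric matrix with ‖Δ‖_F ≤ 10·n·u·‖A‖_F for some u > 0. If 10·n^{3/2}·u·κ₂(A)/(1 − ε) < 1, then Ã + Δ is positive definite. -/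
/-!
For `x ≠ 0`, the Rayleigh quotient bound for `A` together with `‖QᵀQ - I‖₂ ≤ ε` gives
`xᵀ(QᵀAQ)x ≥ λ_n(A) ‖Qx‖² ≥ λ_n(A) (1 - ε) ‖x‖²`, while Cauchy–Schwarz and
`‖A‖_F² = ∑ λ_i² ≤ n λ₁(A)²` give `|xᵀΔx| ≤ ‖Δ‖_F ‖x‖² ≤ 10 n^{3/2} u λ₁(A) ‖x‖²`.
The condition on `κ₂(A)` says exactly that the first bound exceeds the second.
-/

open Matrix BigOperators

theorem exists_orthogonal_diagonalization {n : ℕ} {A : Matrix (Fin n) (Fin n) ℝ}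
    (hA : A.IsHermitian) : ∃ U : Matrix (Fin n) (Fin n) ℝ,
      U * Uᵀ = 1 ∧ Uᵀ * U = 1 ∧ A = U * diagonal hA.eigenvalues * Uᵀ := by
  have h1 := Unitary.mul_star_self_of_mem hA.eigenvectorUnitary.2
  have h2 := Unitary.star_mul_self_of_mem hA.eigenvectorUnitary.2
  have h3 := hA.spectral_theorem
  rw [Unitary.conjStarAlgAut_apply] at h3
  rw [star_eq_conjTranspose, conjTranspose_eq_transpose_of_trivial] at h1 h2 h3
  exact ⟨hA.eigenvectorUnitary.1, h1, h2, h3⟩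

theorem rayleigh_lower {n : ℕ} {A : Matrix (Fin n) (Fin n) ℝ} (hA : A.IsHermitian) {c : ℝ}
    (hc : ∀ i, c ≤ hA.eigenvalues i) (x : Fin n → ℝ) : c * (x ⬝ᵥ x) ≤ x ⬝ᵥ (A *ᵥ x) := by
  obtain ⟨U, hUU, -, hs⟩ := exists_orthogonal_diagonalization hA
  have h1 : x ⬝ᵥ x = (Uᵀ *ᵥ x) ⬝ᵥ (Uᵀ *ᵥ x) := by
    rw [dotProduct_mulVec, vecMul_transpose, mulVec_mulVec, hUU, one_mulVec]
  have h2 : x ⬝ᵥ (A *ᵥ x) = (Uᵀ *ᵥ x) ⬝ᵥ (diagonal hA.eigenvalues *ᵥ (Uᵀ *ᵥ x)) := by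
    rw [mulVec_transpose, ← dotProduct_mulVec, ← mulVec_transpose, mulVec_mulVec, mulVec_mulVec,
      ← hs]
  rw [h1, h2, dotProduct, dotProduct, Finset.mul_sum]
  refine Finset.sum_le_sum fun i _ => ?_
  rw [mulVec_diagonal]
  nlinarith [mul_le_mul_of_nonneg_right (hc i) (mul_self_nonneg ((Uᵀ *ᵥ x) i))]

/-- Since `‖A‖_F² = tr(A²)` is the sum of the squared eigenvalues. -/
theorem frobNorm_le_of_eigenvalues {n : ℕ} {A : Matrix (Fin n) (Fin n) ℝ} (hA : A.IsHermitian)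
    {L : ℝ} (hL : 0 ≤ L) (h : ∀ i, hA.eigenvalues i ^ 2 ≤ L ^ 2) :
    frobNorm A ≤ √n * L := by
  obtain ⟨U, -, hUU, hs⟩ := exists_orthogonal_diagonalization hA
  have htr : ∑ i, ∑ j, A i j ^ 2 = (A * A).trace := by
    simp only [trace, diag, mul_apply]
    refine Finset.sum_congr rfl fun i _ => Finset.sum_congr rfl fun j _ => ?_
    have := hA.apply i j
    simp only [star_trivial] at this
    rw [this, sq]
  have hAA : A * A = U * (diagonal hA.eigenvalues * diagonal hA.eigenvalues) * Uᵀ := by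
    conv_lhs => rw [hs]
    calc _ = U * diagonal hA.eigenvalues * (Uᵀ * U) * diagonal hA.eigenvalues * Uᵀ := by
          simp only [Matrix.mul_assoc]
      _ = _ := by rw [hUU, Matrix.mul_one]; simp only [Matrix.mul_assoc]
  have hsum : ∑ i, ∑ j, A i j ^ 2 = ∑ i, hA.eigenvalues i ^ 2 := by
    rw [htr, hAA, trace_mul_comm, ← Matrix.mul_assoc, hUU, Matrix.one_mul, diagonal_mul_diagonal,
      trace_diagonal]
    exact Finset.sum_congr rfl fun i _ => (sq _).symm
  rw [frobNorm, hsum, ← Real.sqrt_sq hL, ← Real.sqrt_mul (Nat.cast_nonneg n)]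
  refine Real.sqrt_le_sqrt ?_
  calc _ ≤ ∑ _i : Fin n, L ^ 2 := Finset.sum_le_sum fun i _ => h i
    _ = _ := by simp

theorem norm_toLp_sq {n : ℕ} (x : Fin n → ℝ) : ‖WithLp.toLp 2 x‖ ^ 2 = x ⬝ᵥ x := by
  rw [EuclideanSpace.real_norm_sq_eq, dotProduct]
  exact Finset.sum_congr rfl fun i _ => sq _

theorem abs_dotProduct_mulVec_le_specNorm {n : ℕ} (M : Matrix (Fin n) (Fin n) ℝ)
    (x : Fin n → ℝ) : |x ⬝ᵥ (M *ᵥ x)| ≤ specNorm M * (x ⬝ᵥ x) := by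
  have h1 := abs_real_inner_le_norm (toEuclideanLin M (WithLp.toLp 2 x)) (WithLp.toLp 2 x)
  have h2 := (LinearMap.toContinuousLinearMap (toEuclideanLin M)).le_opNorm (WithLp.toLp 2 x)
  rw [LinearMap.coe_toContinuousLinearMap'] at h2
  have h3 : inner ℝ (toEuclideanLin M (WithLp.toLp 2 x)) (WithLp.toLp 2 x) = x ⬝ᵥ (M *ᵥ x) := by
    simp [EuclideanSpace.inner_eq_star_dotProduct]
  rw [h3] at h1
  rw [← norm_toLp_sq, specNorm]
  nlinarith [norm_nonneg (WithLp.toLp 2 x)]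

theorem specNorm_le_frobNorm {n : ℕ} (M : Matrix (Fin n) (Fin n) ℝ) :
    specNorm M ≤ frobNorm M := by
  refine ContinuousLinearMap.opNorm_le_bound _ (Real.sqrt_nonneg _) fun x => ?_
  rw [LinearMap.coe_toContinuousLinearMap', EuclideanSpace.norm_eq, EuclideanSpace.norm_eq,
    frobNorm, ← Real.sqrt_mul (by positivity)]
  refine Real.sqrt_le_sqrt ?_
  rw [Finset.sum_mul]
  refine Finset.sum_le_sum fun i _ => ?_
  simpa [mulVec, dotProduct, sq_abs] using
    Finset.sum_mul_sq_le_sq_mul_sq Finset.univ (fun j => M i j) (fun j => x j)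

theorem eigval_last_le {n : ℕ} [NeZero n] {A : Matrix (Fin n) (Fin n) ℝ} (hA : A.IsHermitian)
    (i : Fin n) : eigval A (Fin.rev 0) ≤ hA.eigenvalues i := by
  rw [eigval, dif_pos hA, Fin.rev_rev]
  have := Tuple.monotone_sort hA.eigenvalues
    (Fin.zero_le ((Tuple.sort hA.eigenvalues).symm i))
  simpa using this

theorem le_eigval_zero {n : ℕ} [NeZero n] {A : Matrix (Fin n) (Fin n) ℝ} (hA : A.IsHermitian)
    (i : Fin n) : hA.eigenvalues i ≤ eigval A 0 := by
  rw [eigval, dif_pos hA]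
  have hle : (Tuple.sort hA.eigenvalues).symm i ≤ Fin.rev 0 := by
    rw [Fin.le_rev_iff]; exact Fin.zero_le _
  simpa using Tuple.monotone_sort hA.eigenvalues hle

/-- Lemma: the computed preconditioned matrix is positive definite. -/
theorem stmt5 {n : ℕ} [NeZero n] (A Q Δ : Matrix (Fin n) (Fin n) ℝ) (ε u : ℝ)
    (hA : A.PosDef) (hQ : specNorm (Qᵀ * Q - 1) ≤ ε) (hε : ε < 1)
    (hΔ : Δ.IsHermitian) (hu : 0 < u)
    (hΔF : frobNorm Δ ≤ 10 * n * u * frobNorm A)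
    (hcond : 10 * (n : ℝ) ^ ((3 : ℝ) / 2) * u * kappa A / (1 - ε) < 1) :
    (Qᵀ * A * Q + Δ).PosDef := by
  have hH := hA.isHermitian
  set l := eigval A (Fin.rev 0) with hl
  set L := eigval A 0 with hL
  have hlpos : 0 < l := by
    rw [hl, eigval, dif_pos hH]
    exact hA.eigenvalues_pos _
  have hLnn : 0 ≤ L := (hA.eigenvalues_pos 0).le.trans (le_eigval_zero hH 0)
  have hFA : frobNorm A ≤ √n * L := frobNorm_le_of_eigenvalues hH hLnn fun i =>
    pow_le_pow_left₀ (hA.eigenvalues_pos i).le (le_eigval_zero hH i) 2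
  have hn : (n : ℝ) ^ ((3 : ℝ) / 2) = n * √n := by
    have hn0 : (0 : ℝ) < n := by exact_mod_cast NeZero.pos n
    rw [show (3 : ℝ) / 2 = 1 + 1 / 2 by norm_num, Real.rpow_add hn0, Real.rpow_one,
      Real.sqrt_eq_rpow]
  have hgap : 10 * (n * √n) * u * L < l * (1 - ε) := by
    have h1 := (div_lt_one (sub_pos.2 hε)).1 hcond
    rw [hn, kappa, ← hl, ← hL, ← mul_div_assoc, div_lt_iff₀ hlpos] at h1
    linarith
  have hΔ2 : frobNorm Δ < l * (1 - ε) := by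
    refine lt_of_le_of_lt (hΔF.trans ?_) hgap
    calc _ ≤ 10 * n * u * (√n * L) := by gcongr
      _ = _ := by ring
  refine PosDef.of_dotProduct_mulVec_pos ?_ fun x hx => ?_
  · refine IsHermitian.add ?_ hΔ
    simpa using isHermitian_conjTranspose_mul_mul Q hH
  have hxx : 0 < x ⬝ᵥ x := by
    simpa using dotProduct_star_self_pos_iff.2 hx
  have hQx : (1 - ε) * (x ⬝ᵥ x) ≤ (Q *ᵥ x) ⬝ᵥ (Q *ᵥ x) := by
    have h1 := (abs_le.1 (abs_dotProduct_mulVec_le_specNorm (Qᵀ * Q - 1) x)).1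
    have h2 : x ⬝ᵥ ((Qᵀ * Q - 1) *ᵥ x) = (Q *ᵥ x) ⬝ᵥ (Q *ᵥ x) - x ⬝ᵥ x := by
      rw [sub_mulVec, one_mulVec, dotProduct_sub, ← mulVec_mulVec, dotProduct_mulVec,
        vecMul_transpose]
    rw [h2] at h1
    nlinarith [mul_le_mul_of_nonneg_right hQ hxx.le]
  have hAx : x ⬝ᵥ ((Qᵀ * A * Q) *ᵥ x) = (Q *ᵥ x) ⬝ᵥ (A *ᵥ (Q *ᵥ x)) := by
    rw [Matrix.mul_assoc, ← mulVec_mulVec, dotProduct_mulVec, vecMul_transpose, mulVec_mulVec]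
  have hR := rayleigh_lower hH (eigval_last_le hH) (Q *ᵥ x)
  have hD := (abs_le.1 (abs_dotProduct_mulVec_le_specNorm Δ x)).1
  have hD2 := mul_le_mul_of_nonneg_right (specNorm_le_frobNorm Δ) hxx.le
  have hD3 := mul_lt_mul_of_pos_right hΔ2 hxx
  have hQ2 := mul_le_mul_of_nonneg_left hQx hlpos.le
  rw [star_trivial, add_mulVec, dotProduct_add, hAx]
  linarith
end

section
/- Let A ∈ ℝ^{n×n} be symmetric positive definite, let Q ∈ ℝ^{n×n} satisfy ‖QᵀQ − I‖₂ ≤ ε for some ε < 1, set Ã = QᵀAQ, and let Δ be a symmetric matrix with ‖Δ‖_F ≤ 10·n·u·‖A‖_F for some u > 0. Then for every k, λ_k(Ã + Δ) ≤ (1 + ε + 10·n^{3/2}·u·κ₂(A))·λ_k(A). -/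
/-!
The bound is a one-sided Courant–Fischer argument. Write `B = QᵀAQ + Δ` and take eigenbases
`a` of `A` and `b` of `B`, ordered by decreasing eigenvalue (`exists_sorted_basis`). The `n - 1`
linear conditions `⟪a_j, Q x⟫ = 0` for `j < k` and `⟪b_j, x⟫ = 0` for `j > k` have a common nonzero
solution `x`. For it

`λ_k(B) ‖x‖² ≤ ⟪x, B x⟫ = ⟪Q x, A (Q x)⟫ + ⟪x, Δ x⟫ ≤ λ_k(A) ‖Q x‖² + ‖Δ‖_F ‖x‖²`,

and `‖Q x‖² ≤ (1 + ε) ‖x‖²`. The conditions on `x` pull the eigenspaces of `A` back along `Q`, so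
invertibility of `Q` plays no role. Finally
`‖Δ‖_F ≤ 10 n u ‖A‖_F ≤ 10 n^{3/2} u λ_1(A) = 10 n^{3/2} u κ₂(A) λ_n(A)`, and `λ_n(A) ≤ λ_k(A)`.
-/

open Matrix BigOperators

lemma inner_toEuclideanLin {n : ℕ} (M : Matrix (Fin n) (Fin n) ℝ) (x y : EuclideanSpace ℝ (Fin n)) :
    inner ℝ x (toEuclideanLin M y) = x.ofLp ⬝ᵥ (M *ᵥ y.ofLp) := by
  simp [EuclideanSpace.inner_eq_star_dotProduct, dotProduct_comm, toLpLin_apply]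

/-- `eigval M` lists the eigenvalues of `M` in decreasing order, along a matching orthonormal
eigenbasis. -/
lemma exists_sorted_basis {n : ℕ} {M : Matrix (Fin n) (Fin n) ℝ} (hM : M.IsHermitian) :
    Antitone (eigval M) ∧ ∃ b : OrthonormalBasis (Fin n) ℝ (EuclideanSpace ℝ (Fin n)),
      ∀ j x, inner ℝ (b j) (toEuclideanLin M x) = eigval M j * inner ℝ (b j) x := by
  have he : ∀ j, eigval M j = hM.eigenvalues ((Tuple.sort hM.eigenvalues) j.rev) := fun j => by
    rw [eigval, dif_pos hM]
  refine ⟨fun i j hij => ?_, hM.eigenvectorBasis.reindex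
    (Fin.revPerm.trans (Tuple.sort hM.eigenvalues)).symm, fun j x => ?_⟩
  · rw [he, he]
    exact Tuple.monotone_sort hM.eigenvalues (Fin.rev_le_rev.2 hij)
  · have hs := isSymmetric_toEuclideanLin_iff.2 hM
    rw [← hs, he]
    simp only [OrthonormalBasis.reindex_apply, Equiv.symm_symm, Equiv.trans_apply,
      Fin.revPerm_apply]
    rw [toLpLin_apply, hM.mulVec_eigenvectorBasis, WithLp.toLp_smul, WithLp.toLp_ofLp,
      inner_smul_left]
    simp

lemma inner_eq_sum_eigval {n : ℕ} {M : Matrix (Fin n) (Fin n) ℝ}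
    {b : OrthonormalBasis (Fin n) ℝ (EuclideanSpace ℝ (Fin n))}
    (hb : ∀ j x, inner ℝ (b j) (toEuclideanLin M x) = eigval M j * inner ℝ (b j) x)
    (x : EuclideanSpace ℝ (Fin n)) :
    inner ℝ x (toEuclideanLin M x) = ∑ j, eigval M j * inner ℝ (b j) x ^ 2 := by
  rw [← b.sum_inner_mul_inner]
  refine Finset.sum_congr rfl fun j _ => ?_
  rw [hb, real_inner_comm]
  ring

lemma norm_sq_eq_sum {n : ℕ} (b : OrthonormalBasis (Fin n) ℝ (EuclideanSpace ℝ (Fin n)))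
    (x : EuclideanSpace ℝ (Fin n)) : ‖x‖ ^ 2 = ∑ j, inner ℝ (b j) x ^ 2 := by
  rw [← b.sum_sq_norm_inner_right x]
  simp

lemma norm_toEuclideanLin_le_frobNorm {n : ℕ} (M : Matrix (Fin n) (Fin n) ℝ)
    (x : EuclideanSpace ℝ (Fin n)) : ‖toEuclideanLin M x‖ ≤ frobNorm M * ‖x‖ := by
  rw [EuclideanSpace.norm_eq, EuclideanSpace.norm_eq, frobNorm, ← Real.sqrt_mul (by positivity)]
  refine Real.sqrt_le_sqrt ?_
  simp only [Real.norm_eq_abs, sq_abs]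
  rw [Finset.sum_mul]
  refine Finset.sum_le_sum fun i _ => ?_
  simpa [toLpLin_apply, mulVec, dotProduct] using
    Finset.sum_mul_sq_le_sq_mul_sq Finset.univ (M i) x.ofLp

/-- Each column `M e_j` has norm at most `λ₁(M)`, and there are `n` columns. -/
lemma frobNorm_le {n : ℕ} [NeZero n] {M : Matrix (Fin n) (Fin n) ℝ} (hM : M.IsHermitian)
    (h0 : ∀ j, 0 ≤ eigval M j) : frobNorm M ≤ Real.sqrt n * eigval M 0 := by
  obtain ⟨hanti, b, hb⟩ := exists_sorted_basis hM
  have hx : ∀ x, ‖toEuclideanLin M x‖ ^ 2 ≤ eigval M 0 ^ 2 * ‖x‖ ^ 2 := fun x => by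
    rw [norm_sq_eq_sum b, norm_sq_eq_sum b, Finset.mul_sum]
    refine Finset.sum_le_sum fun j _ => ?_
    rw [hb, mul_pow]
    have := pow_le_pow_left₀ (h0 j) (hanti (Fin.zero_le j)) 2
    gcongr
  have hcol : ∀ j, ∑ i, M i j ^ 2 ≤ eigval M 0 ^ 2 := fun j => by
    have := hx (EuclideanSpace.single j 1)
    simpa [EuclideanSpace.norm_sq_eq, toLpLin_apply] using this
  rw [frobNorm]
  refine Real.sqrt_le_iff.2 ⟨mul_nonneg (Real.sqrt_nonneg _) (h0 0), ?_⟩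
  rw [Finset.sum_comm, mul_pow, Real.sq_sqrt (Nat.cast_nonneg n)]
  simpa using Finset.sum_le_sum fun j (_ : j ∈ Finset.univ) => hcol j

lemma norm_sq_toEuclideanLin_le {n : ℕ} {Q : Matrix (Fin n) (Fin n) ℝ} {ε : ℝ}
    (hQ : specNorm (Qᵀ * Q - 1) ≤ ε) (x : EuclideanSpace ℝ (Fin n)) :
    ‖toEuclideanLin Q x‖ ^ 2 ≤ (1 + ε) * ‖x‖ ^ 2 := by
  have h1 : ‖toEuclideanLin Q x‖ ^ 2 = ‖x‖ ^ 2 + inner ℝ x (toEuclideanLin (Qᵀ * Q - 1) x) := by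
    rw [← real_inner_self_eq_norm_sq, ← real_inner_self_eq_norm_sq, inner_toEuclideanLin,
      inner_toEuclideanLin, sub_mulVec, dotProduct_sub, one_mulVec, ← mulVec_mulVec,
      EuclideanSpace.inner_eq_star_dotProduct, dotProduct_mulVec _ Qᵀ, vecMul_transpose]
    simp [toLpLin_apply]
  have h2 : inner ℝ x (toEuclideanLin (Qᵀ * Q - 1) x) ≤ ‖x‖ * (ε * ‖x‖) := by
    refine (real_inner_le_norm _ _).trans ?_
    gcongr
    refine ((LinearMap.toContinuousLinearMap (toEuclideanLin (Qᵀ * Q - 1))).le_opNorm x).trans ?_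
    exact mul_le_mul_of_nonneg_right hQ (norm_nonneg _)
  nlinarith

lemma exists_test_vector {n : ℕ} (k : Fin n) (Q : Matrix (Fin n) (Fin n) ℝ)
    (a b : OrthonormalBasis (Fin n) ℝ (EuclideanSpace ℝ (Fin n))) :
    ∃ x : EuclideanSpace ℝ (Fin n), x ≠ 0 ∧
      (∀ j, j < k → inner ℝ (a j) (toEuclideanLin Q x) = 0) ∧
      ∀ j, k < j → inner ℝ (b j) x = 0 := by
  let f : EuclideanSpace ℝ (Fin n) →ₗ[ℝ] ({j // j ≠ k} → ℝ) := LinearMap.pi fun j =>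
    if j.1 < k then (innerₛₗ ℝ (a j)) ∘ₗ toEuclideanLin Q else innerₛₗ ℝ (b j)
  have hf : LinearMap.ker f ≠ ⊥ := by
    apply LinearMap.ker_ne_bot_of_finrank_lt
    have := k.pos
    simp [Fintype.card_subtype_compl]
    omega
  obtain ⟨x, hx, hx0⟩ := Submodule.exists_mem_ne_zero_of_ne_bot hf
  refine ⟨x, hx0, fun j hj => ?_, fun j hj => ?_⟩
  · have := congrFun (LinearMap.mem_ker.1 hx) ⟨j, hj.ne⟩
    simpa [f, hj] using this
  · have := congrFun (LinearMap.mem_ker.1 hx) ⟨j, hj.ne'⟩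
    simpa [f, hj.not_gt] using this

/-- The perturbation bound before `‖Δ‖_F` is compared with the spectrum of `A`. -/
lemma eigval_le {n : ℕ} {A Q Δ : Matrix (Fin n) (Fin n) ℝ} {ε : ℝ}
    (hA : A.IsHermitian) (h0 : ∀ j, 0 ≤ eigval A j) (hQ : specNorm (Qᵀ * Q - 1) ≤ ε)
    (hΔ : Δ.IsHermitian) (k : Fin n) :
    eigval (Qᵀ * A * Q + Δ) k ≤ (1 + ε) * eigval A k + frobNorm Δ := by
  have hB : (Qᵀ * A * Q + Δ).IsHermitian := by
    refine IsHermitian.add ?_ hΔ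
    simpa using isHermitian_conjTranspose_mul_mul Q hA
  obtain ⟨hAa, a, ha⟩ := exists_sorted_basis hA
  obtain ⟨hBa, b, hb⟩ := exists_sorted_basis hB
  obtain ⟨x, hx0, hxa, hxb⟩ := exists_test_vector k Q a b
  have hpos : 0 < ‖x‖ ^ 2 := by positivity
  have lower : eigval (Qᵀ * A * Q + Δ) k * ‖x‖ ^ 2 ≤
      inner ℝ x (toEuclideanLin (Qᵀ * A * Q + Δ) x) := by
    rw [inner_eq_sum_eigval hb, norm_sq_eq_sum b, Finset.mul_sum]
    refine Finset.sum_le_sum fun j _ => ?_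
    rcases le_or_gt j k with h | h
    · exact mul_le_mul_of_nonneg_right (hBa h) (sq_nonneg _)
    · simp [hxb j h]
  have upper : inner ℝ (toEuclideanLin Q x) (toEuclideanLin A (toEuclideanLin Q x)) ≤
      eigval A k * ‖toEuclideanLin Q x‖ ^ 2 := by
    rw [inner_eq_sum_eigval ha, norm_sq_eq_sum a, Finset.mul_sum]
    refine Finset.sum_le_sum fun j _ => ?_
    rcases le_or_gt k j with h | h
    · exact mul_le_mul_of_nonneg_right (hAa h) (sq_nonneg _)
    · simp [hxa j h]
  have split : inner ℝ x (toEuclideanLin (Qᵀ * A * Q + Δ) x) =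
      inner ℝ (toEuclideanLin Q x) (toEuclideanLin A (toEuclideanLin Q x)) +
        inner ℝ x (toEuclideanLin Δ x) := by
    simp only [inner_toEuclideanLin, add_mulVec, dotProduct_add, ← mulVec_mulVec]
    rw [dotProduct_mulVec _ Qᵀ, vecMul_transpose]
    simp [toLpLin_apply]
  have hd : inner ℝ x (toEuclideanLin Δ x) ≤ ‖x‖ * (frobNorm Δ * ‖x‖) :=
    (real_inner_le_norm _ _).trans
      (mul_le_mul_of_nonneg_left (norm_toEuclideanLin_le_frobNorm Δ x) (norm_nonneg _))
  have hq := mul_le_mul_of_nonneg_left (norm_sq_toEuclideanLin_le hQ x) (h0 k)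
  refine le_of_mul_le_mul_right ?_ hpos
  nlinarith

/-- eigenvalue upper bound for the perturbed preconditioned matrix. -/
theorem stmt6 {n : ℕ} [NeZero n] (A Q Δ : Matrix (Fin n) (Fin n) ℝ) (ε u : ℝ)
    (hA : A.PosDef) (hQ : specNorm (Qᵀ * Q - 1) ≤ ε) (hε : ε < 1)
    (hΔ : Δ.IsHermitian) (hu : 0 < u)
    (hΔF : frobNorm Δ ≤ 10 * n * u * frobNorm A) (k : Fin n) :
    eigval (Qᵀ * A * Q + Δ) k ≤
      (1 + ε + 10 * (n : ℝ) ^ ((3 : ℝ) / 2) * u * kappa A) * eigval A k := by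
  have hpos : ∀ j, 0 < eigval A j := fun j => by
    rw [eigval, dif_pos hA.isHermitian]
    exact hA.eigenvalues_pos _
  have h0 := fun j => (hpos j).le
  have hn : (0 : ℝ) < n := Nat.cast_pos.2 (NeZero.pos n)
  have hpow : (n : ℝ) ^ ((3 : ℝ) / 2) = n * Real.sqrt n := by
    rw [Real.sqrt_eq_rpow, ← Real.rpow_one_add' hn.le (by norm_num)]
    norm_num
  have hκ : eigval A 0 ≤ kappa A * eigval A k := by
    have hlast : eigval A (Fin.rev 0) ≤ eigval A k :=
      (exists_sorted_basis hA.isHermitian).1 (by rw [Fin.le_rev_iff]; exact Fin.zero_le _)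
    rw [kappa, div_mul_eq_mul_div, le_div_iff₀ (hpos _)]
    exact mul_le_mul_of_nonneg_left hlast (h0 0)
  have hF : frobNorm Δ ≤ 10 * (n : ℝ) ^ ((3 : ℝ) / 2) * u * kappa A * eigval A k := by
    calc frobNorm Δ ≤ 10 * n * u * frobNorm A := hΔF
      _ ≤ 10 * n * u * (Real.sqrt n * (kappa A * eigval A k)) := by
        have := frobNorm_le hA.isHermitian h0
        gcongr
        exact this.trans (by gcongr)
      _ = _ := by rw [hpow]; ring
  have := eigval_le hA.isHermitian h0 hQ hΔ k
  linarith
end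

section
/- Let A ∈ ℝ^{n×n} be symmetric positive definite, let Q ∈ ℝ^{n×n} satisfy ‖QᵀQ − I‖₂ ≤ ε for some ε < 1, and set Ã = QᵀAQ. Then for all i, j, (|Qᵀ||A||Q|)_{ij} / √(ã_{ii}ã_{jj}) ≤ (1+ε)²·n^{1/2}·κ₂(A)/(1 − ε). -/
/-!
Write `q_i` for the columns of `Q`, and `L`, `l` for the extreme eigenvalues of `A`.
Cauchy–Schwarz over pairs of indices gives
`(|Qᵀ||A||Q|)_{ij}² ≤ ‖q_i‖² ‖q_j‖² ‖A‖_F²`, and `‖A‖_F² ≤ n L²` since each column of `A` has norm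
at most `L`. The Rayleigh bound gives `(QᵀAQ)_{ii} ≥ l ‖q_i‖²`, so the norms of the columns of `Q`
cancel and the quotient is at most `√n · κ₂(A)`. Since `0 ≤ ε < 1`, the factor `(1 + ε)² / (1 - ε)`
is at least `1`, which gives the claim.

Both spectral bounds (`sum_mulVec_sq_le`, `le_dotProduct_mulVec`) are proved by expanding
in an orthonormal eigenbasis of `A`.
-/

open Matrix BigOperators

lemma eigenvalues_le_eigval {n : ℕ} [NeZero n] {A : Matrix (Fin n) (Fin n) ℝ}
    (h : A.IsHermitian) (k : Fin n) : h.eigenvalues k ≤ eigval A 0 := by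
  have hm := Tuple.monotone_sort h.eigenvalues
  have hk : (Tuple.sort h.eigenvalues).symm k ≤ (0 : Fin n).rev := by
    rw [Fin.le_rev_iff]; exact Fin.zero_le _
  have := hm hk
  rw [eigval, dif_pos h]
  simpa using this

lemma eigval_le_eigenvalues {n : ℕ} [NeZero n] {A : Matrix (Fin n) (Fin n) ℝ}
    (h : A.IsHermitian) (k : Fin n) : eigval A (Fin.rev 0) ≤ h.eigenvalues k := by
  have hm := Tuple.monotone_sort h.eigenvalues
  have := hm (Fin.zero_le ((Tuple.sort h.eigenvalues).symm k))
  rw [eigval, dif_pos h]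
  simpa using this

/-- The coordinates of `A v` in the eigenbasis are those of `v`, scaled by the eigenvalues. -/
lemma inner_eigenvectorBasis_mulVec {n : ℕ} {A : Matrix (Fin n) (Fin n) ℝ}
    (h : A.IsHermitian) (v : Fin n → ℝ) (k : Fin n) :
    inner ℝ (h.eigenvectorBasis k) (WithLp.toLp 2 (A *ᵥ v)) =
      h.eigenvalues k * inner ℝ (h.eigenvectorBasis k) (WithLp.toLp 2 v) := by
  have hT : Aᵀ = A := by simpa using h.eq
  have hb := h.mulVec_eigenvectorBasis k
  simp only [EuclideanSpace.inner_eq_star_dotProduct, star_trivial]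
  rw [dotProduct_comm, dotProduct_mulVec, ← mulVec_transpose, hT, hb, smul_dotProduct,
    dotProduct_comm, smul_eq_mul]

lemma sum_mulVec_sq_le {n : ℕ} [NeZero n] {A : Matrix (Fin n) (Fin n) ℝ}
    (hA : A.PosDef) (v : Fin n → ℝ) :
    ∑ k, (A *ᵥ v) k ^ 2 ≤ eigval A 0 ^ 2 * ∑ k, v k ^ 2 := by
  have h := hA.isHermitian
  have e (w : Fin n → ℝ) : ∑ k, w k ^ 2 =
      ∑ k, (inner ℝ (h.eigenvectorBasis k) (WithLp.toLp 2 w)) ^ 2 := by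
    have := h.eigenvectorBasis.sum_sq_norm_inner_right (WithLp.toLp 2 w)
    simp only [EuclideanSpace.real_norm_sq_eq, Real.norm_eq_abs, sq_abs] at this
    exact this.symm
  rw [e (A *ᵥ v), e v, Finset.mul_sum]
  refine Finset.sum_le_sum fun k _ => ?_
  rw [inner_eigenvectorBasis_mulVec, mul_pow]
  have h0 := (hA.eigenvalues_pos k).le
  have h1 := eigenvalues_le_eigval h k
  gcongr

lemma le_dotProduct_mulVec {n : ℕ} [NeZero n] {A : Matrix (Fin n) (Fin n) ℝ}
    (h : A.IsHermitian) (v : Fin n → ℝ) :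
    eigval A (Fin.rev 0) * ∑ k, v k ^ 2 ≤ v ⬝ᵥ (A *ᵥ v) := by
  have e1 := h.eigenvectorBasis.sum_sq_norm_inner_right (WithLp.toLp 2 v)
  simp only [EuclideanSpace.real_norm_sq_eq, Real.norm_eq_abs, sq_abs] at e1
  have e2 := h.eigenvectorBasis.sum_inner_mul_inner (WithLp.toLp 2 v) (WithLp.toLp 2 (A *ᵥ v))
  have e3 : inner ℝ (WithLp.toLp 2 v) (WithLp.toLp 2 (A *ᵥ v)) = v ⬝ᵥ (A *ᵥ v) := by
    simp [EuclideanSpace.inner_eq_star_dotProduct, dotProduct_comm]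
  rw [← e3, ← e2, ← e1, Finset.mul_sum]
  refine Finset.sum_le_sum fun k _ => ?_
  rw [inner_eigenvectorBasis_mulVec, real_inner_comm]
  have h1 := eigval_le_eigenvalues h k
  nlinarith [mul_le_mul_of_nonneg_right h1
    (sq_nonneg (inner ℝ (WithLp.toLp 2 v) (h.eigenvectorBasis k)))]

/-- The Frobenius norm bound `‖A‖_F² ≤ n λ₁(A)²`. -/
lemma sum_sq_entries_le {n : ℕ} [NeZero n] {A : Matrix (Fin n) (Fin n) ℝ} (hA : A.PosDef) :
    ∑ k, ∑ l, A k l ^ 2 ≤ n * eigval A 0 ^ 2 := by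
  rw [Finset.sum_comm]
  calc ∑ l, ∑ k, A k l ^ 2 ≤ ∑ _l : Fin n, eigval A 0 ^ 2 := by
        refine Finset.sum_le_sum fun l _ => ?_
        have := sum_mulVec_sq_le hA (Pi.single l 1)
        simpa [Pi.single_apply, Matrix.mulVec_single_one] using this
    _ = n * eigval A 0 ^ 2 := by simp

/-- Cauchy–Schwarz over pairs of indices. -/
lemma absM_mul_sq_le {n : ℕ} (A Q : Matrix (Fin n) (Fin n) ℝ) (i j : Fin n) :
    ((absM Qᵀ * absM A * absM Q) i j) ^ 2 ≤
      (∑ k, Q k i ^ 2) * (∑ l, Q l j ^ 2) * ∑ k, ∑ l, A k l ^ 2 := by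
  have e : (absM Qᵀ * absM A * absM Q) i j =
      ∑ p : Fin n × Fin n, (|Q p.1 i| * |Q p.2 j|) * |A p.1 p.2| := by
    rw [Fintype.sum_prod_type_right]
    simp only [Matrix.mul_apply, absM, Matrix.of_apply, Matrix.transpose_apply, Finset.sum_mul]
    refine Finset.sum_congr rfl fun l _ => Finset.sum_congr rfl fun k _ => by ring
  rw [e]
  refine (Finset.sum_mul_sq_le_sq_mul_sq _ _ _).trans (le_of_eq ?_)
  simp only [mul_pow, sq_abs, Fintype.sum_prod_type, Finset.sum_mul_sum]

/-- bound on α_{ij} = (|Qᵀ||A||Q|)_{ij}/√(ã_ii ã_jj). -/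
theorem stmt7 {n : ℕ} [NeZero n] (A Q : Matrix (Fin n) (Fin n) ℝ) (ε : ℝ)
    (hA : A.PosDef) (hQ : specNorm (Qᵀ * Q - 1) ≤ ε) (hε : ε < 1) (i j : Fin n) :
    (absM Qᵀ * absM A * absM Q) i j /
        Real.sqrt ((Qᵀ * A * Q) i i * (Qᵀ * A * Q) j j) ≤
      (1 + ε) ^ 2 * (n : ℝ) ^ ((1 : ℝ) / 2) * kappa A / (1 - ε) := by
  have hε0 : 0 ≤ ε := le_trans (norm_nonneg _) hQ
  have hl : 0 < eigval A (Fin.rev 0) := by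
    rw [eigval, dif_pos hA.isHermitian]
    exact hA.eigenvalues_pos _
  have hL : 0 < eigval A 0 :=
    (hA.eigenvalues_pos 0).trans_le (eigenvalues_le_eigval hA.isHermitian 0)
  have hdiag (i : Fin n) :
      eigval A (Fin.rev 0) * ∑ k, Q k i ^ 2 ≤ (Qᵀ * A * Q) i i := by
    have := le_dotProduct_mulVec hA.isHermitian (fun k => Q k i)
    rw [Matrix.mul_assoc]
    exact this
  have hκ : 0 < kappa A := div_pos hL hl
  have hκl : eigval A 0 = kappa A * eigval A (Fin.rev 0) := by
    rw [kappa, div_mul_cancel₀ _ hl.ne']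
  rw [← Real.sqrt_eq_rpow]
  have hmain : (absM Qᵀ * absM A * absM Q) i j /
      Real.sqrt ((Qᵀ * A * Q) i i * (Qᵀ * A * Q) j j) ≤ Real.sqrt n * kappa A := by
    refine div_le_of_le_mul₀ (Real.sqrt_nonneg _) (by positivity) ?_
    have hX (i : Fin n) : 0 ≤ ∑ k, Q k i ^ 2 := Finset.sum_nonneg fun _ _ => sq_nonneg _
    have hY (i : Fin n) : 0 ≤ (Qᵀ * A * Q) i i := (mul_nonneg hl.le (hX i)).trans (hdiag i)
    refine le_of_sq_le_sq ?_ (by positivity)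
    rw [mul_pow, mul_pow, Real.sq_sqrt (Nat.cast_nonneg n),
      Real.sq_sqrt (mul_nonneg (hY i) (hY j))]
    calc ((absM Qᵀ * absM A * absM Q) i j) ^ 2
        ≤ (∑ k, Q k i ^ 2) * (∑ l, Q l j ^ 2) * ∑ k, ∑ l, A k l ^ 2 := absM_mul_sq_le A Q i j
      _ ≤ (∑ k, Q k i ^ 2) * (∑ l, Q l j ^ 2) * (n * eigval A 0 ^ 2) :=
          mul_le_mul_of_nonneg_left (sum_sq_entries_le hA) (mul_nonneg (hX i) (hX j))
      _ = n * kappa A ^ 2 * ((eigval A (Fin.rev 0) * ∑ k, Q k i ^ 2) *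
            (eigval A (Fin.rev 0) * ∑ k, Q k j ^ 2)) := by rw [hκl]; ring
      _ ≤ n * kappa A ^ 2 * ((Qᵀ * A * Q) i i * (Qᵀ * A * Q) j j) :=
          mul_le_mul_of_nonneg_left
            (mul_le_mul (hdiag i) (hdiag j) (mul_nonneg hl.le (hX j)) (hY i)) (by positivity)
  refine hmain.trans ?_
  rw [le_div_iff₀ (by linarith)]
  have h0 : 0 ≤ Real.sqrt n * kappa A := by positivity
  nlinarith [mul_nonneg h0 hε0, mul_nonneg h0 (sq_nonneg ε)]
end

section
/- Let a, b be positive real numbers with |b − a| ≤ 2u·a for some u with 0 < u < 0.1. Then |a^{−1/2} − b^{−1/2}| ≤ 2u·a^{−1/2}. -/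
/-!
With `s = √a` and `t = √b`, multiplying by `s t` turns the claim into `|t - s| ≤ 2ut`.
Here `|t - s| (t + s) = |b - a| ≤ 2us²`, so `s² ≤ t (t + s)` suffices. This follows from
`t ≥ 0.8 s`, which holds because `b ≥ (1 - 2u) a ≥ 0.8 a ≥ 0.64 a`.
-/

open Matrix BigOperators

/-- perturbation of inverse square roots. -/
theorem stmt8 (a b u : ℝ) (ha : 0 < a) (hb : 0 < b)
    (hu0 : 0 < u) (hu1 : u < 0.1) (h : |b - a| ≤ 2 * u * a) :
    |(Real.sqrt a)⁻¹ - (Real.sqrt b)⁻¹| ≤ 2 * u * (Real.sqrt a)⁻¹ := by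
  obtain ⟨s, hs, rfl⟩ : ∃ s : ℝ, 0 < s ∧ s ^ 2 = a :=
    ⟨√a, Real.sqrt_pos.2 ha, Real.sq_sqrt ha.le⟩
  obtain ⟨t, ht, rfl⟩ : ∃ t : ℝ, 0 < t ∧ t ^ 2 = b :=
    ⟨√b, Real.sqrt_pos.2 hb, Real.sq_sqrt hb.le⟩
  rw [Real.sqrt_sq hs.le, Real.sqrt_sq ht.le]
  have hts : 0.8 * s ≤ t := by
    have hlow := (abs_le.1 h).1
    norm_num at hu1 ⊢
    nlinarith [mul_pos hs hs]
  have hst : s ^ 2 ≤ t * (t + s) := by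
    norm_num at hts
    nlinarith [mul_pos hs hs]
  have hdiff : |t - s| ≤ 2 * u * t := by
    have hfac : |t - s| * (t + s) = |t ^ 2 - s ^ 2| := by
      rw [← abs_of_pos (add_pos ht hs), ← abs_mul]
      congr 1
      ring
    refine le_of_mul_le_mul_right ?_ (add_pos ht hs)
    calc |t - s| * (t + s) = |t ^ 2 - s ^ 2| := hfac
      _ ≤ 2 * u * s ^ 2 := h
      _ ≤ 2 * u * (t * (t + s)) := by gcongr
      _ = 2 * u * t * (t + s) := by ring
  have hinv : s⁻¹ - t⁻¹ = (t - s) / (s * t) := by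
    field_simp
  rw [hinv, abs_div, abs_of_pos (mul_pos hs ht), div_le_iff₀ (mul_pos hs ht)]
  calc |t - s| ≤ 2 * u * t := hdiff
    _ = 2 * u * s⁻¹ * (s * t) := by field_simp
end

section
/- Let Ã ∈ ℝ^{n×n} be symmetric positive definite and let Δ be a symmetric matrix with |Δ_{ij}| ≤ 2u√(ã_{ii}ã_{jj}) for all i, j, where 0 < u < 0.1. Set B = Ã + Δ, D₁ = diag(b_{ii}^{−1/2}) and D₂ = diag(ã_{ii}^{−1/2}) (the diagonal entries b_{ii} of B are positive). Then every entry of D₁BD₁ − D₂ÃD₂ has absolute value at most 2u + 2u/√(1 − 2u) + 2u/(1 − 2u). -/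
/-!
Write `m = √(ã_ii ã_jj)` and `M = √(b_ii b_jj)`. The diagonal part of the bound on `Δ` gives
`(1 - 2u) m ≤ M ≤ (1 + 2u) m`, and positive definiteness gives `|ã_ij| ≤ m`. The entry in question
is `(ã_ij + Δ_ij) / M - ã_ij / m = ã_ij (m - M) / (m M) + Δ_ij / M`, and each of the two terms is at
most `2u m / M ≤ 2u / (1 - 2u)`. With `s = √(1 - 2u)`, the inequality `1 ≤ s² + s`, valid because
`s² > 0.8`, turns one copy of `2u / s²` into `2u + 2u / s`.
-/

open Matrix BigOperators

/-- This is nonnegativity of the principal `2 × 2` minor on the indices `i`, `j`. -/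
lemma abs_entry_le_of_posSemidef {n : ℕ} {A : Matrix (Fin n) (Fin n) ℝ} (hA : A.PosSemidef)
    (i j : Fin n) : |A i j| ≤ Real.sqrt (A i i * A j j) := by
  have h := (hA.submatrix ![i, j]).det_nonneg
  have hs : A j i = A i j := by simpa using hA.isHermitian.apply i j
  simp only [Matrix.det_fin_two, Matrix.submatrix_apply, Matrix.cons_val_zero,
    Matrix.cons_val_one, hs] at h
  apply Real.abs_le_sqrt
  nlinarith

/-- The elementary step `1 / s² ≤ 1 + 1 / s` for `s² = 1 - 2u`, scaled by `2u`. -/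
lemma two_u_div_le {u : ℝ} (hu0 : 0 < u) (hu1 : u < 0.1) :
    2 * u / (1 - 2 * u) ≤ 2 * u + 2 * u / Real.sqrt (1 - 2 * u) := by
  norm_num at hu1
  have hs : 0 < Real.sqrt (1 - 2 * u) := Real.sqrt_pos.2 (by linarith)
  have hsq : Real.sqrt (1 - 2 * u) ^ 2 = 1 - 2 * u := Real.sq_sqrt (by linarith)
  have hs' : 1 / 2 ≤ Real.sqrt (1 - 2 * u) := Real.le_sqrt_of_sq_le (by linarith)
  generalize Real.sqrt (1 - 2 * u) = s at *
  rw [← hsq]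
  have h : 2 * u + 2 * u / s - 2 * u / s ^ 2 = 2 * u * (s ^ 2 + s - 1) / s ^ 2 := by
    field_simp
  have h2 : 0 ≤ 2 * u * (s ^ 2 + s - 1) / s ^ 2 :=
    div_nonneg (mul_nonneg (by linarith) (by linarith)) (by positivity)
  linarith

/-- The perturbation estimate for a single entry: `a`, `d` are the entries of the matrix and of the
perturbation, `m`, `M` the old and new scaling factors. -/
lemma abs_scaled_sub_le {a d m M u : ℝ} (hu0 : 0 < u) (hu1 : u < 0.1) (hm : 0 < m)
    (hl : (1 - 2 * u) * m ≤ M) (hr : M ≤ (1 + 2 * u) * m) (ha : |a| ≤ m)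
    (hd : |d| ≤ 2 * u * m) :
    |(a + d) / M - a / m| ≤ 2 * u / (1 - 2 * u) + 2 * u / (1 - 2 * u) := by
  norm_num at hu1
  have hu : 0 < 1 - 2 * u := by linarith
  have hM : 0 < M := lt_of_lt_of_le (mul_pos hu hm) hl
  have key : 2 * u * m / M ≤ 2 * u / (1 - 2 * u) := by
    rw [div_le_div_iff₀ hM hu]
    nlinarith
  have e : (a + d) / M - a / m = a / m * ((m - M) / M) + d / M := by
    field_simp
    ring
  have h1 : |a / m| ≤ 1 := by
    rw [abs_div, abs_of_pos hm]
    exact (div_le_one hm).2 ha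
  have h2 : |(m - M) / M| ≤ 2 * u * m / M := by
    rw [abs_div, abs_of_pos hM]
    gcongr
    exact abs_le.2 ⟨by linarith, by linarith⟩
  have h3 : |d / M| ≤ 2 * u * m / M := by
    rw [abs_div, abs_of_pos hM]
    gcongr
  have h4 : |a / m * ((m - M) / M)| ≤ 2 * u * m / M := by
    rw [abs_mul]
    exact (mul_le_of_le_one_left (abs_nonneg _) h1).trans h2
  rw [e]
  exact (abs_add_le _ _).trans (by linarith)

/-- entrywise bound on the difference of the scaled matrices,
where `At` plays the role of Ã. -/
theorem stmt9 {n : ℕ} (At Δ : Matrix (Fin n) (Fin n) ℝ) (u : ℝ)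
    (hA : At.PosDef) (hΔ : Δ.IsHermitian) (hu0 : 0 < u) (hu1 : u < 0.1)
    (hb : ∀ i j, |Δ i j| ≤ 2 * u * Real.sqrt (At i i * At j j)) :
    ∀ i j,
      |((Matrix.diagonal (fun i => (Real.sqrt ((At + Δ) i i))⁻¹) * (At + Δ) *
            Matrix.diagonal (fun i => (Real.sqrt ((At + Δ) i i))⁻¹)) -
          (Matrix.diagonal (fun i => (Real.sqrt (At i i))⁻¹) * At *
            Matrix.diagonal (fun i => (Real.sqrt (At i i))⁻¹))) i j| ≤
        2 * u + 2 * u / Real.sqrt (1 - 2 * u) + 2 * u / (1 - 2 * u) := by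
  intro i j
  have hu1' : u < 1 / 10 := by norm_num at hu1 ⊢; exact hu1
  have hpos : ∀ k, 0 < At k k := fun k => hA.diag_pos
  have hdiag : ∀ k, (1 - 2 * u) * At k k ≤ (At + Δ) k k ∧
      (At + Δ) k k ≤ (1 + 2 * u) * At k k := by
    intro k
    have h := hb k k
    rw [Real.sqrt_mul_self (hpos k).le, abs_le] at h
    rw [Matrix.add_apply]
    constructor <;> linarith [h.1, h.2]
  have hB : ∀ k, 0 < (At + Δ) k k := fun k =>
    lt_of_lt_of_le (mul_pos (by linarith) (hpos k)) (hdiag k).1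
  have hprod : 0 < At i i * At j j := mul_pos (hpos i) (hpos j)
  have hl : (1 - 2 * u) * Real.sqrt (At i i * At j j) ≤
      Real.sqrt ((At + Δ) i i * (At + Δ) j j) := by
    apply Real.le_sqrt_of_sq_le
    rw [mul_pow, Real.sq_sqrt hprod.le]
    have h := mul_le_mul (hdiag i).1 (hdiag j).1
      (mul_pos (by linarith) (hpos j)).le (hB i).le
    linarith
  have hr : Real.sqrt ((At + Δ) i i * (At + Δ) j j) ≤
      (1 + 2 * u) * Real.sqrt (At i i * At j j) := by
    apply Real.sqrt_le_iff.2 ⟨by positivity, ?_⟩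
    rw [mul_pow, Real.sq_sqrt hprod.le]
    have h := mul_le_mul (hdiag i).2 (hdiag j).2 (hB j).le
      (mul_pos (by linarith) (hpos i)).le
    linarith
  have main := abs_scaled_sub_le hu0 hu1 (Real.sqrt_pos.2 hprod) hl hr
    (abs_entry_le_of_posSemidef hA.posSemidef i j) (hb i j)
  have e : ((Matrix.diagonal (fun i => (Real.sqrt ((At + Δ) i i))⁻¹) * (At + Δ) *
            Matrix.diagonal (fun i => (Real.sqrt ((At + Δ) i i))⁻¹)) -
          (Matrix.diagonal (fun i => (Real.sqrt (At i i))⁻¹) * At *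
            Matrix.diagonal (fun i => (Real.sqrt (At i i))⁻¹))) i j =
      (At i j + Δ i j) / Real.sqrt ((At + Δ) i i * (At + Δ) j j) -
        At i j / Real.sqrt (At i i * At j j) := by
    rw [Real.sqrt_mul (hB i).le, Real.sqrt_mul (hpos i).le, Matrix.sub_apply,
      Matrix.mul_diagonal, Matrix.diagonal_mul, Matrix.mul_diagonal, Matrix.diagonal_mul,
      Matrix.add_apply At Δ i j, div_eq_mul_inv, div_eq_mul_inv, mul_inv, mul_inv]
    ring
  rw [e]
  linarith [two_u_div_le hu0 hu1]
end

section
/- Let Ã ∈ ℝ^{n×n} be symmetric positive definite, let Δ be a symmetric matrix with |Δ_{ij}| ≤ 2u√(ã_{ii}ã_{jj}) for all i, j, where 0 < u < 0.1, and set c(n,u) = n(2u + 2u/√(1 − 2u) + 2u/(1 − 2u)). If c(n,u)·κ₂ˢ(Ã) < 1, then Ã + Δ is positive definite and κ₂ˢ(Ã + Δ) ≤ ((1 + c(n,u))/(1 − c(n,u)·κ₂ˢ(Ã)))·κ₂ˢ(Ã). -/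
/-!
Write `N = diag(Ã)`, `Q_M(v) = vᵀ M v`, `x = 2u`, `t = n x`, and let `λ₁`, `λₙ` be the extreme
eigenvalues of the scaled matrix of `Ã`, with ratio `κ`. By the Rayleigh characterization,
`λₙ Q_N ≤ Q_Ã ≤ λ₁ Q_N`. The entrywise bound and Cauchy–Schwarz give `|Q_Δ| ≤ t Q_N`, so
`(λₙ - t) Q_N ≤ Q_{Ã+Δ} ≤ (λ₁ + t) Q_N`. The diagonal of `Ã + Δ` lies between `(1 - x) N` and
`(1 + x) N`, so its extreme scaled eigenvalues are at most `(λ₁ + t) / (1 - x)` and at least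
`(λₙ - t) / (1 + x)`.

The scaled matrix has unit diagonal, hence `λₙ ≤ 1 ≤ λ₁`, and `c ≥ 3 t`. Thus `c κ < 1` gives
`λₙ - t > 0`, and the bound on the condition number reduces to the scalar inequality
`(1 + x)(λ₁ + t)(λₙ - c λ₁) ≤ (1 + c) λ₁ (1 - x)(λₙ - t)`. It is monotone in `c`, so `c = 3 t` is
the critical case (`scalar_ineq`).
-/

open Matrix BigOperators

/-- Diagonalization of a quadratic form in orthonormal coordinates. -/
lemma exists_coords {n : ℕ} {M : Matrix (Fin n) (Fin n) ℝ} (h : M.IsHermitian) (x : Fin n → ℝ) :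
    ∃ w : Fin n → ℝ, x ⬝ᵥ M *ᵥ x = ∑ i, h.eigenvalues i * w i ^ 2 ∧
      ∑ i, x i ^ 2 = ∑ i, w i ^ 2 := by
  let U : Matrix (Fin n) (Fin n) ℝ := h.eigenvectorUnitary
  have hU : U * Uᵀ = 1 := by
    have := Unitary.coe_mul_star_self h.eigenvectorUnitary
    rwa [Unitary.coe_star, Matrix.star_eq_conjTranspose,
      Matrix.conjTranspose_eq_transpose_of_trivial] at this
  have hM : M = U * diagonal h.eigenvalues * Uᵀ := by
    have := h.spectral_theorem
    rw [Unitary.conjStarAlgAut_apply, Matrix.star_eq_conjTranspose,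
      Matrix.conjTranspose_eq_transpose_of_trivial] at this
    exact this
  refine ⟨Uᵀ *ᵥ x, ?_, ?_⟩
  · have key : x ⬝ᵥ (U * diagonal h.eigenvalues * Uᵀ) *ᵥ x =
        (Uᵀ *ᵥ x) ⬝ᵥ diagonal h.eigenvalues *ᵥ (Uᵀ *ᵥ x) := by
      rw [← Matrix.mulVec_mulVec, ← Matrix.mulVec_mulVec, Matrix.dotProduct_mulVec,
        ← Matrix.mulVec_transpose]
    rw [← hM] at key
    rw [key]
    simp only [dotProduct, Matrix.mulVec_diagonal]
    exact Finset.sum_congr rfl fun i _ => by ring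
  · have key : x ⬝ᵥ x = (Uᵀ *ᵥ x) ⬝ᵥ (Uᵀ *ᵥ x) := by
      conv_rhs => arg 1; rw [Matrix.mulVec_transpose]
      rw [← Matrix.dotProduct_mulVec, Matrix.mulVec_mulVec, hU, Matrix.one_mulVec]
    simpa only [dotProduct, ← sq] using key

lemma eigval_zero_spec {n : ℕ} [NeZero n] {M : Matrix (Fin n) (Fin n) ℝ} (h : M.IsHermitian) :
    (∀ i, h.eigenvalues i ≤ eigval M 0) ∧ ∃ i, eigval M 0 = h.eigenvalues i := by
  refine ⟨fun i => ?_, _, by rw [eigval, dif_pos h]⟩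
  have := Tuple.monotone_sort h.eigenvalues
    (show (Tuple.sort h.eigenvalues).symm i ≤ Fin.rev 0 from by
      rw [← Fin.rev_le_rev, Fin.rev_rev]; exact Fin.zero_le _)
  rw [eigval, dif_pos h]
  simpa using this

lemma eigval_last_spec {n : ℕ} [NeZero n] {M : Matrix (Fin n) (Fin n) ℝ} (h : M.IsHermitian) :
    (∀ i, eigval M (Fin.rev 0) ≤ h.eigenvalues i) ∧
      ∃ i, eigval M (Fin.rev 0) = h.eigenvalues i := by
  refine ⟨fun i => ?_, _, by rw [eigval, dif_pos h]⟩
  have := Tuple.monotone_sort h.eigenvalues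
    (show 0 ≤ (Tuple.sort h.eigenvalues).symm i from Fin.zero_le _)
  rw [eigval, dif_pos h, Fin.rev_rev]
  simpa using this

lemma rayleigh {n : ℕ} [NeZero n] {M : Matrix (Fin n) (Fin n) ℝ} (h : M.IsHermitian)
    (x : Fin n → ℝ) :
    eigval M (Fin.rev 0) * ∑ i, x i ^ 2 ≤ x ⬝ᵥ M *ᵥ x ∧
      x ⬝ᵥ M *ᵥ x ≤ eigval M 0 * ∑ i, x i ^ 2 := by
  obtain ⟨w, h1, h2⟩ := exists_coords h x
  rw [h1, h2, Finset.mul_sum, Finset.mul_sum]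
  exact ⟨Finset.sum_le_sum fun i _ =>
      mul_le_mul_of_nonneg_right ((eigval_last_spec h).1 i) (sq_nonneg _),
    Finset.sum_le_sum fun i _ =>
      mul_le_mul_of_nonneg_right ((eigval_zero_spec h).1 i) (sq_nonneg _)⟩

/-- Every eigenvalue is the value of the quadratic form at a unit vector. -/
lemma exists_unit_eigen {n : ℕ} {M : Matrix (Fin n) (Fin n) ℝ} (h : M.IsHermitian) (i : Fin n) :
    ∃ v : Fin n → ℝ, ∑ j, v j ^ 2 = 1 ∧ v ⬝ᵥ M *ᵥ v = h.eigenvalues i := by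
  have hv : ∑ j, (h.eigenvectorBasis i j) ^ 2 = 1 := by
    have := EuclideanSpace.real_norm_sq_eq (h.eigenvectorBasis i)
    rw [h.eigenvectorBasis.orthonormal.1 i] at this
    simpa using this.symm
  refine ⟨h.eigenvectorBasis i, hv, ?_⟩
  rw [h.mulVec_eigenvectorBasis, dotProduct_smul, dotProduct]
  simp only [← sq, hv, smul_eq_mul, mul_one]

lemma scaled_isHermitian {n : ℕ} {A : Matrix (Fin n) (Fin n) ℝ} (h : A.IsHermitian) :
    (scaled A).IsHermitian := by
  have := Matrix.isHermitian_mul_mul_conjTranspose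
    (diagonal fun i => (Real.sqrt (A i i))⁻¹) h
  simpa [scaled, Matrix.diagonal_conjTranspose] using this

lemma scaled_form {n : ℕ} (A : Matrix (Fin n) (Fin n) ℝ) (x : Fin n → ℝ) :
    x ⬝ᵥ scaled A *ᵥ x =
      (fun i => (Real.sqrt (A i i))⁻¹ * x i) ⬝ᵥ A *ᵥ (fun i => (Real.sqrt (A i i))⁻¹ * x i) := by
  have hd : (diagonal fun i => (Real.sqrt (A i i))⁻¹) *ᵥ x =
      fun i => (Real.sqrt (A i i))⁻¹ * x i := by
    ext i; rw [Matrix.mulVec_diagonal]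
  rw [scaled, ← Matrix.mulVec_mulVec, ← Matrix.mulVec_mulVec, hd, Matrix.dotProduct_mulVec]
  congr 1
  ext i
  rw [Matrix.vecMul_diagonal, mul_comm]

/-- The Rayleigh bounds of the scaled matrix, read on the unscaled one: the extreme eigenvalues of
`scaled A` bound the form of `A` relative to that of its diagonal. -/
lemma rayleigh_scaled {n : ℕ} [NeZero n] {A : Matrix (Fin n) (Fin n) ℝ} (h : A.IsHermitian)
    (hd : ∀ i, 0 < A i i) (y : Fin n → ℝ) :
    eigval (scaled A) (Fin.rev 0) * ∑ i, A i i * y i ^ 2 ≤ y ⬝ᵥ A *ᵥ y ∧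
      y ⬝ᵥ A *ᵥ y ≤ eigval (scaled A) 0 * ∑ i, A i i * y i ^ 2 := by
  have := rayleigh (scaled_isHermitian h) (fun i => Real.sqrt (A i i) * y i)
  rw [scaled_form] at this
  have h1 : (fun i => (Real.sqrt (A i i))⁻¹ * (Real.sqrt (A i i) * y i)) = y := by
    ext i
    exact inv_mul_cancel_left₀ (Real.sqrt_pos.2 (hd i)).ne' _
  have h2 : ∀ i, (Real.sqrt (A i i) * y i) ^ 2 = A i i * y i ^ 2 := fun i => by
    rw [mul_pow, Real.sq_sqrt (hd i).le]
  simpa only [h1, h2] using this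

lemma exists_scaled_eigen {n : ℕ} {A : Matrix (Fin n) (Fin n) ℝ} (h : A.IsHermitian)
    (hd : ∀ i, 0 < A i i) (i : Fin n) :
    ∃ y : Fin n → ℝ, ∑ j, A j j * y j ^ 2 = 1 ∧
      y ⬝ᵥ A *ᵥ y = (scaled_isHermitian h).eigenvalues i := by
  obtain ⟨v, hv, hq⟩ := exists_unit_eigen (scaled_isHermitian h) i
  refine ⟨_, ?_, (scaled_form A v).symm.trans hq⟩
  rw [← hv]
  refine Finset.sum_congr rfl fun j _ => ?_
  rw [mul_pow, inv_pow, Real.sq_sqrt (hd j).le]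
  exact mul_inv_cancel_left₀ (hd j).ne' _

/-- Cauchy–Schwarz bound of the form of `Δ` by that of the diagonal of `A`. -/
lemma pert_form {n : ℕ} {A Δ : Matrix (Fin n) (Fin n) ℝ} {x : ℝ} (hx : 0 ≤ x)
    (hd : ∀ i, 0 < A i i) (hb : ∀ i j, |Δ i j| ≤ x * Real.sqrt (A i i * A j j))
    (y : Fin n → ℝ) : |y ⬝ᵥ Δ *ᵥ y| ≤ n * x * ∑ i, A i i * y i ^ 2 := by
  have h1 : |y ⬝ᵥ Δ *ᵥ y| ≤ x * (∑ i, Real.sqrt (A i i) * |y i|) ^ 2 := by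
    simp only [dotProduct, Matrix.mulVec]
    rw [sq, Finset.sum_mul_sum, Finset.mul_sum]
    refine (Finset.abs_sum_le_sum_abs _ _).trans (Finset.sum_le_sum fun i _ => ?_)
    rw [abs_mul, Finset.mul_sum]
    refine (mul_le_mul_of_nonneg_left (Finset.abs_sum_le_sum_abs _ _) (abs_nonneg _)).trans ?_
    rw [Finset.mul_sum]
    refine Finset.sum_le_sum fun j _ => ?_
    have := hb i j
    rw [Real.sqrt_mul (hd i).le] at this
    rw [abs_mul]
    calc |y i| * (|Δ i j| * |y j|)
        ≤ |y i| * (x * (Real.sqrt (A i i) * Real.sqrt (A j j)) * |y j|) := by gcongr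
      _ = _ := by ring
  have h2 : (∑ i, Real.sqrt (A i i) * |y i|) ^ 2 ≤ n * ∑ i, A i i * y i ^ 2 := by
    have := sq_sum_le_card_mul_sum_sq (s := Finset.univ)
      (f := fun i => Real.sqrt (A i i) * |y i|)
    simpa only [mul_pow, sq_abs, Real.sq_sqrt (hd _).le, Finset.card_univ, Fintype.card_fin]
      using this
  calc _ ≤ _ := h1
    _ ≤ x * (n * ∑ i, A i i * y i ^ 2) := mul_le_mul_of_nonneg_left h2 hx
    _ = _ := by ring

/-- The scalar inequality behind the condition number bound; `L`, `l` are the extreme eigenvalues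
of the scaled matrix. -/
lemma scalar_ineq {x t c L l : ℝ} (hx : 0 < x) (hx1 : x < 1) (ht : x ≤ t) (hc : 3 * t ≤ c)
    (hL : 1 ≤ L) (hl1 : l ≤ 1) (hpos : 0 < l - c * L) :
    (1 + x) * (L + t) * (l - c * L) ≤ (1 + c) * L * ((1 - x) * (l - t)) := by
  have ht0 : 0 < t := hx.trans_le ht
  have hp3 : 0 < l - 3 * t * L := by nlinarith
  have hp1 : 0 < l - t * L := by nlinarith
  have htL : t ≤ t * L := by nlinarith
  -- The case `c = 3 t`, with `t` replaced by `t L` where that weakens a factor, divided by `L`.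
  have hcore : (1 + x) * (1 + t) * (l - 3 * t * L) ≤ (1 + 3 * t) * (1 - x) * (l - t * L) := by
    -- The difference of the sides decreases in `x`, so `x = t` is the worst case.
    have h1 : 0 ≤ (t - x) * ((1 + 3 * t) * (l - t * L) + (1 + t) * (l - 3 * t * L)) :=
      mul_nonneg (by linarith) (by positivity)
    have h2 : 0 ≤ t * (2 * t * (L - l) + L * (1 + 3 * t ^ 2)) :=
      mul_nonneg ht0.le (add_nonneg (mul_nonneg (by linarith) (by linarith)) (by positivity))
    nlinarith
  calc (1 + x) * (L + t) * (l - c * L)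
      ≤ (1 + x) * (L + t * L) * (l - 3 * t * L) := by
        have : c * L ≥ 3 * t * L := mul_le_mul_of_nonneg_right hc (by linarith)
        gcongr
    _ = L * ((1 + x) * (1 + t) * (l - 3 * t * L)) := by ring
    _ ≤ L * ((1 + 3 * t) * (1 - x) * (l - t * L)) :=
        mul_le_mul_of_nonneg_left hcore (by linarith)
    _ = (1 + 3 * t) * L * ((1 - x) * (l - t * L)) := by ring
    _ ≤ (1 + c) * L * ((1 - x) * (l - t)) := by
        have : 0 < 1 - x := by linarith
        gcongr
        nlinarith

/-- STATEMENT 10 (Lemma: bound on κ₂ˢ of the perturbed matrix),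
where `At` plays the role of Ã. -/
theorem stmt10 {n : ℕ} [NeZero n] (At Δ : Matrix (Fin n) (Fin n) ℝ) (u : ℝ)
    (hA : At.PosDef) (hΔ : Δ.IsHermitian) (hu0 : 0 < u) (hu1 : u < 0.1)
    (hb : ∀ i j, |Δ i j| ≤ 2 * u * Real.sqrt (At i i * At j j))
    (hcond : (n : ℝ) * (2 * u + 2 * u / Real.sqrt (1 - 2 * u) + 2 * u / (1 - 2 * u)) *
        kappaS At < 1) :
    (At + Δ).PosDef ∧
      kappaS (At + Δ) ≤
        ((1 + (n : ℝ) * (2 * u + 2 * u / Real.sqrt (1 - 2 * u) + 2 * u / (1 - 2 * u))) /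
            (1 - (n : ℝ) * (2 * u + 2 * u / Real.sqrt (1 - 2 * u) + 2 * u / (1 - 2 * u)) *
              kappaS At)) * kappaS At := by
  set c : ℝ := (n : ℝ) * (2 * u + 2 * u / Real.sqrt (1 - 2 * u) + 2 * u / (1 - 2 * u)) with hc
  have hu1' : u < 1 / 10 := by norm_num at hu1 ⊢; exact hu1
  have hd : ∀ i, 0 < At i i := fun i => hA.diag_pos
  have hn : (1 : ℝ) ≤ n := by exact_mod_cast Nat.one_le_iff_ne_zero.2 (NeZero.ne n)
  have hAH := hA.isHermitian
  have hBH : (At + Δ).IsHermitian := hAH.add hΔ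
  set L := eigval (scaled At) 0 with hLdef
  set l := eigval (scaled At) (Fin.rev 0) with hldef
  have hray := fun y => rayleigh_scaled hAH hd y
  have hpert := fun y => pert_form (by linarith : 0 ≤ 2 * u) hd hb y
  set t : ℝ := n * (2 * u) with ht
  have htx : 2 * u ≤ t := by nlinarith
  have hct : 3 * t ≤ c := by
    have h1 : 2 * u ≤ 2 * u / (1 - 2 * u) := by
      rw [le_div_iff₀ (by linarith)]; nlinarith
    have h2 : 2 * u ≤ 2 * u / Real.sqrt (1 - 2 * u) := by
      rw [le_div_iff₀ (Real.sqrt_pos.2 (by linarith))]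
      have : Real.sqrt (1 - 2 * u) ≤ 1 := Real.sqrt_le_one.2 (by linarith)
      nlinarith
    rw [hc, ht]
    nlinarith
  have hl0 : 0 < l := by
    obtain ⟨i, hi⟩ := (eigval_last_spec (scaled_isHermitian hAH)).2
    obtain ⟨y, hy, hq⟩ := exists_scaled_eigen hAH hd i
    have hy0 : y ≠ 0 := by rintro rfl; simp at hy
    have := hA.dotProduct_mulVec_pos hy0
    rw [star_trivial, hq, ← hi] at this
    exact this
  -- The scaled matrix has unit diagonal, so `1` is a value of its form on the unit sphere.
  have hone : l ≤ 1 ∧ 1 ≤ L := by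
    have := hray (Pi.single 0 1)
    have e : ∑ i, At i i * (Pi.single 0 1 : Fin n → ℝ) i ^ 2 = At 0 0 := by
      simp [Pi.single_apply]
    have e2 : (Pi.single 0 1 : Fin n → ℝ) ⬝ᵥ At *ᵥ Pi.single 0 1 = At 0 0 := by simp
    rw [e, e2] at this
    exact ⟨by nlinarith [hd 0, this.1], by nlinarith [hd 0, this.2]⟩
  have hkap : kappaS At = L / l := rfl
  have hpos : 0 < l - c * L := by
    rw [hkap, ← mul_div_assoc, div_lt_one hl0] at hcond
    linarith
  have hlt : 0 < l - t := by nlinarith [hone.2]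
  have hB : ∀ y : Fin n → ℝ, (l - t) * ∑ i, At i i * y i ^ 2 ≤ y ⬝ᵥ (At + Δ) *ᵥ y ∧
      y ⬝ᵥ (At + Δ) *ᵥ y ≤ (L + t) * ∑ i, At i i * y i ^ 2 := fun y => by
    rw [Matrix.add_mulVec, dotProduct_add]
    have h1 := hray y
    have h2 := abs_le.1 (hpert y)
    constructor <;> linarith [h1.1, h1.2, h2.1, h2.2]
  have hBP : (At + Δ).PosDef := by
    refine PosDef.of_dotProduct_mulVec_pos hBH fun y hy => ?_
    rw [star_trivial]
    refine lt_of_lt_of_le (mul_pos hlt ?_) (hB y).1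
    obtain ⟨i, hi⟩ := Function.ne_iff.1 hy
    exact Finset.sum_pos' (fun j _ => mul_nonneg (hd j).le (sq_nonneg _))
      ⟨i, Finset.mem_univ _, mul_pos (hd i) (sq_pos_of_ne_zero hi)⟩
  refine ⟨hBP, ?_⟩
  have hdB : ∀ i, 0 < (At + Δ) i i := fun i => hBP.diag_pos
  have hdiag : ∀ i, (1 - 2 * u) * At i i ≤ (At + Δ) i i ∧
      (At + Δ) i i ≤ (1 + 2 * u) * At i i := fun i => by
    have := hb i i
    rw [Real.sqrt_mul_self (hd i).le] at this
    have := abs_le.1 this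
    rw [Matrix.add_apply]
    constructor <;> linarith [this.1, this.2]
  have hsum : ∀ y : Fin n → ℝ, ∑ i, (At + Δ) i i * y i ^ 2 = 1 →
      (1 - 2 * u) * ∑ i, At i i * y i ^ 2 ≤ 1 ∧ 1 ≤ (1 + 2 * u) * ∑ i, At i i * y i ^ 2 :=
    fun y hy => by
      rw [Finset.mul_sum, Finset.mul_sum]
      constructor
      · refine (Finset.sum_le_sum fun i _ => ?_).trans_eq hy
        rw [← mul_assoc]
        exact mul_le_mul_of_nonneg_right (hdiag i).1 (sq_nonneg _)
      · refine hy.symm.trans_le (Finset.sum_le_sum fun i _ => ?_)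
        rw [← mul_assoc]
        exact mul_le_mul_of_nonneg_right (hdiag i).2 (sq_nonneg _)
  have hmax : eigval (scaled (At + Δ)) 0 ≤ (L + t) / (1 - 2 * u) := by
    obtain ⟨i, hi⟩ := (eigval_zero_spec (scaled_isHermitian hBH)).2
    obtain ⟨y, hy, hq⟩ := exists_scaled_eigen hBH hdB i
    rw [hi, ← hq, le_div_iff₀ (by linarith)]
    nlinarith [(hB y).2, (hsum y hy).1, hone.2]
  have hmin : (l - t) / (1 + 2 * u) ≤ eigval (scaled (At + Δ)) (Fin.rev 0) := by
    obtain ⟨i, hi⟩ := (eigval_last_spec (scaled_isHermitian hBH)).2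
    obtain ⟨y, hy, hq⟩ := exists_scaled_eigen hBH hdB i
    rw [hi, ← hq, div_le_iff₀ (by linarith)]
    nlinarith [(hB y).1, (hsum y hy).2]
  have hx1 : 0 < 1 - 2 * u := by linarith
  have hx2 : 0 < 1 + 2 * u := by linarith
  calc kappaS (At + Δ)
      ≤ ((L + t) / (1 - 2 * u)) / ((l - t) / (1 + 2 * u)) := by
        exact div_le_div₀ (div_nonneg (by linarith [hone.2]) hx1.le) hmax
          (div_pos hlt hx2) hmin
    _ = ((1 + 2 * u) * (L + t)) / ((1 - 2 * u) * (l - t)) := by field_simp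
    _ ≤ ((1 + c) * L) / (l - c * L) := by
        rw [div_le_div_iff₀ (mul_pos hx1 hlt) hpos]
        exact scalar_ineq (by linarith) (by linarith) htx hct hone.2 hone.1 hpos
    _ = ((1 + c) / (1 - c * kappaS At)) * kappaS At := by
        rw [hkap]
        have : 1 - c * (L / l) = (l - c * L) / l := by field_simp
        rw [this]
        field_simp
end

section
/- Let A ∈ ℝ^{n×n} be symmetric, let V = Q + ΔQ be orthogonal with ‖ΔQ‖₂ ≤ δ, let ΔA ∈ ℝ^{n×n} satisfy ‖ΔA‖₂ ≤ η‖A‖₂, and let Λ be a diagonal matrix such that A + ΔA = VΛVᵀ. Then ‖QᵀAQ − Λ‖₂ ≤ (2δ + δ² + η)‖A‖₂, and consequently off(QᵀAQ) ≤ n^{1/2}(2δ + δ² + η)‖A‖₂. -/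
/-!
Write `V = Q + ΔQ`. Substituting `Q = V - ΔQ` and using `Vᵀ(A + ΔA)V = Λ` gives
`QᵀAQ - Λ = -VᵀΔA V - ΔQᵀAV - VᵀAΔQ + ΔQᵀAΔQ`. Since `‖V‖₂ ≤ 1`, the four terms are bounded in
spectral norm by `η‖A‖₂`, `δ‖A‖₂`, `δ‖A‖₂` and `δ²‖A‖₂` (`specNorm_triple_le`).

As `Λ` is diagonal, `QᵀAQ` and `QᵀAQ - Λ` have the same off-diagonal entries, so `off(QᵀAQ)` is at
most the Frobenius norm of `QᵀAQ - Λ`. This is at most `√n` times its spectral norm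
(`frobNorm_le_sqrt_mul_specNorm`), because every column `M eⱼ` has length at most `‖M‖₂`.
-/

open Matrix BigOperators

section SpectralNorm

open scoped Matrix.Norms.L2Operator

/-- `specNorm` is Mathlib's scoped `ℓ²` operator norm, whose normed ring structure the next lemmas
rely on. -/
lemma specNorm_eq_norm {n : ℕ} (A : Matrix (Fin n) (Fin n) ℝ) : specNorm A = ‖A‖ := rfl

lemma specNorm_nonneg {n : ℕ} (A : Matrix (Fin n) (Fin n) ℝ) : 0 ≤ specNorm A := by
  rw [specNorm_eq_norm]; exact norm_nonneg _

lemma specNorm_neg {n : ℕ} (A : Matrix (Fin n) (Fin n) ℝ) : specNorm (-A) = specNorm A := by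
  simp only [specNorm_eq_norm]; exact norm_neg _

lemma specNorm_add_le {n : ℕ} (A B : Matrix (Fin n) (Fin n) ℝ) :
    specNorm (A + B) ≤ specNorm A + specNorm B := by
  simp only [specNorm_eq_norm]; exact norm_add_le _ _

lemma specNorm_transpose {n : ℕ} (A : Matrix (Fin n) (Fin n) ℝ) :
    specNorm Aᵀ = specNorm A := by
  simp only [specNorm_eq_norm]
  rw [← conjTranspose_eq_transpose_of_trivial]
  exact l2_opNorm_conjTranspose A

lemma specNorm_triple_le {n : ℕ} {X A Y : Matrix (Fin n) (Fin n) ℝ} {a b c : ℝ}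
    (hX : specNorm X ≤ a) (hA : specNorm A ≤ b) (hY : specNorm Y ≤ c) :
    specNorm (Xᵀ * A * Y) ≤ a * b * c := by
  have ha := (specNorm_nonneg X).trans hX
  have hb := (specNorm_nonneg A).trans hA
  rw [← specNorm_transpose X] at hX
  simp only [specNorm_eq_norm] at *
  calc ‖Xᵀ * A * Y‖ ≤ ‖Xᵀ‖ * ‖A‖ * ‖Y‖ :=
        (l2_opNorm_mul _ _).trans (mul_le_mul_of_nonneg_right (l2_opNorm_mul _ _) (norm_nonneg _))
    _ ≤ a * b * c := by gcongr

/-- Only `≤` holds in general: in dimension `0` the norm is `0`. -/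
lemma specNorm_le_one_of_orthogonal {n : ℕ} {V : Matrix (Fin n) (Fin n) ℝ} (hV : Vᵀ * V = 1) :
    specNorm V ≤ 1 := by
  rw [specNorm_eq_norm]
  have h := l2_opNorm_conjTranspose_mul_self V
  rw [conjTranspose_eq_transpose_of_trivial, hV, ← diagonal_one, l2_opNorm_diagonal] at h
  have h1 : ‖(fun _ : Fin n => (1 : ℝ))‖ ≤ 1 :=
    (pi_norm_le_iff_of_nonneg zero_le_one).2 fun _ => by simp
  nlinarith [norm_nonneg V]

end SpectralNorm

lemma sum_sq_col_le {n : ℕ} (M : Matrix (Fin n) (Fin n) ℝ) (j : Fin n) :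
    ∑ i, (M i j) ^ 2 ≤ specNorm M ^ 2 := by
  have h := (LinearMap.toContinuousLinearMap (Matrix.toEuclideanLin M)).le_opNorm
    (EuclideanSpace.single j 1)
  have h2 : ‖LinearMap.toContinuousLinearMap (Matrix.toEuclideanLin M)
      (EuclideanSpace.single j 1)‖ ^ 2 = ∑ i, (M i j) ^ 2 := by
    simp [EuclideanSpace.norm_sq_eq, Matrix.toLpLin_apply]
  rw [← h2]
  simp only [PiLp.norm_single, norm_one, mul_one] at h
  exact pow_le_pow_left₀ (norm_nonneg _) h 2

lemma frobNorm_le_sqrt_mul_specNorm {n : ℕ} (M : Matrix (Fin n) (Fin n) ℝ) :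
    frobNorm M ≤ √n * specNorm M := by
  unfold frobNorm
  refine Real.sqrt_le_iff.2 ⟨mul_nonneg (Real.sqrt_nonneg _) (specNorm_nonneg M), ?_⟩
  rw [Finset.sum_comm, mul_pow, Real.sq_sqrt (Nat.cast_nonneg n)]
  calc ∑ j, ∑ i, (M i j) ^ 2 ≤ ∑ _j : Fin n, specNorm M ^ 2 :=
        Finset.sum_le_sum fun j _ => sum_sq_col_le M j
    _ = n * specNorm M ^ 2 := by simp

/-- Among all diagonal matrices, the diagonal part of `B` is the closest to `B` in the Frobenius
norm. -/
lemma offQ_le_frobNorm_sub_diagonal {n : ℕ} (B : Matrix (Fin n) (Fin n) ℝ) (d : Fin n → ℝ) :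
    offQ B ≤ frobNorm (B - diagonal d) := by
  unfold offQ frobNorm
  refine Real.sqrt_le_sqrt (Finset.sum_le_sum fun i _ => Finset.sum_le_sum fun j _ => ?_)
  by_cases hij : i = j
  · subst hij
    simpa using sq_nonneg (B i i - d i)
  · simp [hij]

/-- bound on ‖QᵀAQ − Λ‖₂ and on off(QᵀAQ). -/
theorem stmt16 {n : ℕ} (A Q ΔQ ΔA Λ : Matrix (Fin n) (Fin n) ℝ) (δ η : ℝ)
    (hA : A.IsHermitian) (horth : (Q + ΔQ)ᵀ * (Q + ΔQ) = 1)
    (hδ : specNorm ΔQ ≤ δ) (hΔA : specNorm ΔA ≤ η * specNorm A)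
    (hdiag : ∃ d : Fin n → ℝ, Λ = Matrix.diagonal d)
    (heq : A + ΔA = (Q + ΔQ) * Λ * (Q + ΔQ)ᵀ) :
    specNorm (Qᵀ * A * Q - Λ) ≤ (2 * δ + δ ^ 2 + η) * specNorm A ∧
      offQ (Qᵀ * A * Q) ≤ (n : ℝ) ^ ((1 : ℝ) / 2) * (2 * δ + δ ^ 2 + η) * specNorm A := by
  have hV := specNorm_le_one_of_orthogonal horth
  have hfirst : specNorm (Qᵀ * A * Q - Λ) ≤ (2 * δ + δ ^ 2 + η) * specNorm A := by
    generalize hVdef : Q + ΔQ = V at *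
    obtain rfl : Q = V - ΔQ := eq_sub_of_add_eq hVdef
    have hΛ : Λ = Vᵀ * A * V + Vᵀ * ΔA * V := by
      calc Λ = (Vᵀ * V) * Λ * (Vᵀ * V) := by simp [horth]
        _ = Vᵀ * (V * Λ * Vᵀ) * V := by simp only [Matrix.mul_assoc]
        _ = Vᵀ * A * V + Vᵀ * ΔA * V := by rw [← heq, Matrix.mul_add, Matrix.add_mul]
    have hdecomp : (V - ΔQ)ᵀ * A * (V - ΔQ) - Λ =
        -(Vᵀ * ΔA * V) + -(ΔQᵀ * A * V) + -(Vᵀ * A * ΔQ) + ΔQᵀ * A * ΔQ := by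
      rw [hΛ, transpose_sub]
      noncomm_ring
    rw [hdecomp]
    have e1 := specNorm_triple_le hV hΔA hV
    have e2 := specNorm_triple_le hδ (le_refl (specNorm A)) hV
    have e3 := specNorm_triple_le hV (le_refl (specNorm A)) hδ
    have e4 := specNorm_triple_le hδ (le_refl (specNorm A)) hδ
    have t1 := specNorm_add_le (-(Vᵀ * ΔA * V) + -(ΔQᵀ * A * V) + -(Vᵀ * A * ΔQ)) (ΔQᵀ * A * ΔQ)
    have t2 := specNorm_add_le (-(Vᵀ * ΔA * V) + -(ΔQᵀ * A * V)) (-(Vᵀ * A * ΔQ))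
    have t3 := specNorm_add_le (-(Vᵀ * ΔA * V)) (-(ΔQᵀ * A * V))
    simp only [specNorm_neg] at t2 t3
    linarith
  refine ⟨hfirst, ?_⟩
  obtain ⟨d, rfl⟩ := hdiag
  rw [← Real.sqrt_eq_rpow, mul_assoc √(n : ℝ)]
  calc offQ (Qᵀ * A * Q) ≤ frobNorm (Qᵀ * A * Q - diagonal d) :=
        offQ_le_frobNorm_sub_diagonal _ d
    _ ≤ √n * specNorm (Qᵀ * A * Q - diagonal d) := frobNorm_le_sqrt_mul_specNorm _
    _ ≤ √n * ((2 * δ + δ ^ 2 + η) * specNorm A) :=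
        mul_le_mul_of_nonneg_left hfirst (Real.sqrt_nonneg _)
end
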